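/- There is no Diophantine m-tuple with m ≥ 43 in the ring of integers of any imaginary quadratic number field. That is, if S ⊆ O_K is a finite set of nonzero elements such that for all distinct u, v ∈ S the element uv + 1 is a square in O_K, then |S| ≤ 42. -/

import Mathlib

open Polynomial in
/-- The `t ^ k` coefficient of `G(t) N(a + t) / ((a - b + t) (a - c + t)) ^ (k + 1)`, i.e. the
residue at `z = a` of `G(z - a) N(z) / ((z - a) (z - b) (z - c)) ^ (k + 1)`. -/
noncomputable def nodeResidue (a b c : ℂ) (k : ℕ) (G : PowerSeries ℂ) : ℂ[X] →ₗ[ℂ] ℂ where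
  toFun N := PowerSeries.coeff k (G * ((N.comp (X + C a) : ℂ[X]) : PowerSeries ℂ) *
    ((((X + C (a - b)) * (X + C (a - c)) : ℂ[X]) : PowerSeries ℂ)⁻¹) ^ (k + 1))
  map_add' N N' := by simp [mul_add, add_mul]
  map_smul' r N := by
    simp only [smul_comp, coe_smul, RingHom.id_apply, smul_eq_mul]
    rw [mul_smul_comm, smul_mul_assoc, PowerSeries.coeff_smul, smul_eq_mul]

section NodeResidue

open Polynomial

variable {a b c : ℂ} {k : ℕ} {G : PowerSeries ℂ}

/-- The monic cubic with roots `a`, `b`, `c`. -/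
noncomputable def nodeCubic (a b c : ℂ) : ℂ[X] := (X - C a) * ((X - C b) * (X - C c))

lemma nodeCubic_comp (a b c : ℂ) :
    (nodeCubic a b c).comp (X + C a) = X * ((X + C (a - b)) * (X + C (a - c))) := by
  simp only [nodeCubic, mul_comp, sub_comp, X_comp, C_comp, C_sub]
  ring

lemma coe_mul_inv_eq_one (hab : a ≠ b) (hac : a ≠ c) :
    (((X + C (a - b)) * (X + C (a - c)) : ℂ[X]) : PowerSeries ℂ) *
      (((X + C (a - b)) * (X + C (a - c)) : ℂ[X]) : PowerSeries ℂ)⁻¹ = 1 := by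
  apply PowerSeries.mul_inv_cancel
  simp [sub_ne_zero.2 hab, sub_ne_zero.2 hac]

lemma coeff_X_mul_derivative_sub (W : PowerSeries ℂ) (k : ℕ) :
    PowerSeries.coeff k
      (PowerSeries.X * PowerSeries.derivative ℂ W - (k : PowerSeries ℂ) * W) = 0 := by
  have h : (k : PowerSeries ℂ) * W = (k : ℂ) • W := by
    rw [PowerSeries.smul_eq_C_mul]; simp
  rw [h, map_sub, PowerSeries.coeff_smul]
  cases k with
  | zero => simp
  | succ n =>
    rw [PowerSeries.coeff_succ_X_mul, PowerSeries.coeff_derivative]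
    push_cast
    simp [mul_comm]

/-- The Taylor expansion of a polynomial at `a`, as a power series. -/
noncomputable def taylorSeries (a : ℂ) (N : ℂ[X]) : PowerSeries ℂ :=
  ((N.comp (X + C a) : ℂ[X]) : PowerSeries ℂ)

lemma taylorSeries_mul (a : ℂ) (M N : ℂ[X]) :
    taylorSeries a (M * N) = taylorSeries a M * taylorSeries a N := by
  simp [taylorSeries]

lemma taylorSeries_derivative (a : ℂ) (N : ℂ[X]) :
    taylorSeries a (derivative N) = PowerSeries.derivative ℂ (taylorSeries a N) := by
  rw [taylorSeries, taylorSeries, PowerSeries.derivative_coe, derivative_comp]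
  simp

lemma taylorSeries_nodeCubic (a b c : ℂ) : taylorSeries a (nodeCubic a b c) =
    PowerSeries.X * (((X + C (a - b)) * (X + C (a - c)) : ℂ[X]) : PowerSeries ℂ) := by
  rw [taylorSeries, nodeCubic_comp]
  simp

lemma nodeResidue_apply (a b c : ℂ) (k : ℕ) (G : PowerSeries ℂ) (N : ℂ[X]) :
    nodeResidue a b c k G N = PowerSeries.coeff k (G * taylorSeries a N *
      ((((X + C (a - b)) * (X + C (a - c)) : ℂ[X]) : PowerSeries ℂ)⁻¹) ^ (k + 1)) := rfl

/-- The derivative of the Laurent series `g(t) / (t B(t)) ^ k` has no residue. -/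
lemma coeff_derivative_div_eq_zero {B : PowerSeries ℂ} (hB : B * B⁻¹ = 1) (g : PowerSeries ℂ)
    (k : ℕ) :
    PowerSeries.coeff k ((PowerSeries.X * B * PowerSeries.derivative ℂ g -
      (k : PowerSeries ℂ) * (g * PowerSeries.derivative ℂ (PowerSeries.X * B))) *
        B⁻¹ ^ (k + 1)) = 0 := by
  rw [← coeff_X_mul_derivative_sub (g * B⁻¹ ^ k) k]
  congr 1
  have hd : PowerSeries.derivative ℂ (B⁻¹ ^ k) =
      - (k : PowerSeries ℂ) * (B⁻¹ ^ (k + 1) * PowerSeries.derivative ℂ B) := by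
    rw [PowerSeries.derivative_pow, PowerSeries.derivative_inv']
    cases k with
    | zero => simp
    | succ n => simp only [Nat.add_sub_cancel]; push_cast; ring
  rw [Derivation.leibniz, Derivation.leibniz, hd, pow_succ]
  simp only [smul_eq_mul, PowerSeries.derivative_X]
  linear_combination (B⁻¹ ^ k * (PowerSeries.X * PowerSeries.derivative ℂ g - k * g)) * hB

lemma coe_natCast_polynomial (k : ℕ) : ((k : ℂ[X]) : PowerSeries ℂ) = (k : PowerSeries ℂ) :=
  map_natCast (Polynomial.coeToPowerSeries.ringHom (R := ℂ)) k

/-- Exact forms have no residue: this is the derivative of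
`(T + z) ^ α R(z) / nodeCubic(z) ^ k`. -/
lemma nodeResidue_exact (hab : a ≠ b) (hac : a ≠ c) {T α : ℂ}
    (hG : PowerSeries.derivative ℂ ((PowerSeries.X + PowerSeries.C (T + a)) * G) =
      PowerSeries.C α * G) (R : ℂ[X]) :
    nodeResidue a b c k G (C α * (R * nodeCubic a b c) + (X + C T) *
      (nodeCubic a b c * derivative R - (k : ℂ[X]) * (R * derivative (nodeCubic a b c)))) = 0 := by
  rw [← coeff_derivative_div_eq_zero (coe_mul_inv_eq_one hab hac)
    ((PowerSeries.X + PowerSeries.C (T + a)) * G * taylorSeries a R) k,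
    nodeResidue_apply, ← taylorSeries_nodeCubic, Derivation.leibniz _ (_ * G), hG,
    ← taylorSeries_derivative, ← taylorSeries_derivative]
  congr 2
  simp only [taylorSeries, add_comp, mul_comp, sub_comp, C_comp, X_comp, natCast_comp, coe_add,
    coe_mul, coe_sub, coe_C, coe_X, smul_eq_mul, map_add, coe_natCast_polynomial]
  ring

/-- The residue with trivial weight of an exact form vanishes. -/
lemma nodeResidue_one_exact (hab : a ≠ b) (hac : a ≠ c) (R : ℂ[X]) :
    nodeResidue a b c k 1
      (nodeCubic a b c * derivative R - (k : ℂ[X]) * (R * derivative (nodeCubic a b c))) = 0 := by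
  rw [← coeff_derivative_div_eq_zero (coe_mul_inv_eq_one hab hac) (taylorSeries a R) k,
    nodeResidue_apply, ← taylorSeries_nodeCubic, ← taylorSeries_derivative,
    ← taylorSeries_derivative]
  congr 2
  simp only [taylorSeries, mul_comp, sub_comp, natCast_comp, coe_mul, coe_sub,
    coe_natCast_polynomial]
  ring

lemma nodeResidue_succ_nodeCubic_mul (hab : a ≠ b) (hac : a ≠ c) (N : ℂ[X]) :
    nodeResidue a b c (k + 1) 1 (nodeCubic a b c * N) = nodeResidue a b c k 1 N := by
  have hB := coe_mul_inv_eq_one hab hac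
  rw [nodeResidue_apply, nodeResidue_apply, ← PowerSeries.coeff_succ_X_mul k, taylorSeries_mul,
    taylorSeries_nodeCubic]
  congr 1
  set B := (((X + C (a - b)) * (X + C (a - c)) : ℂ[X]) : PowerSeries ℂ)
  rw [pow_succ]
  linear_combination (PowerSeries.X * taylorSeries a N * B⁻¹ ^ (k + 1)) * hB

/-- Sum of the three residues with trivial weight at the nodes `0`, `p`, `q`. -/
noncomputable def residueSum (p q : ℂ) (k : ℕ) : ℂ[X] →ₗ[ℂ] ℂ :=
  nodeResidue 0 p q k 1 + nodeResidue p 0 q k 1 + nodeResidue q 0 p k 1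

lemma nodeCubic_rotate (p q : ℂ) : nodeCubic p 0 q = nodeCubic 0 p q ∧
    nodeCubic q 0 p = nodeCubic 0 p q := by
  constructor <;> · simp only [nodeCubic]; ring

section ResidueSum

variable {p q : ℂ}

lemma residueSum_exact (hp : p ≠ 0) (hq : q ≠ 0) (hpq : p ≠ q) (k : ℕ) (R : ℂ[X]) :
    residueSum p q k
      (nodeCubic 0 p q * derivative R - (k : ℂ[X]) * (R * derivative (nodeCubic 0 p q))) = 0 := by
  have h0 := nodeResidue_one_exact (k := k) hp.symm hq.symm R
  have h1 := nodeResidue_one_exact (k := k) hp hpq R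
  have h2 := nodeResidue_one_exact (k := k) hq hpq.symm R
  rw [(nodeCubic_rotate p q).1] at h1
  rw [(nodeCubic_rotate p q).2] at h2
  simp only [residueSum, LinearMap.add_apply, h0, h1, h2, add_zero]

lemma residueSum_succ_mul (hp : p ≠ 0) (hq : q ≠ 0) (hpq : p ≠ q) (k : ℕ) (N : ℂ[X]) :
    residueSum p q (k + 1) (nodeCubic 0 p q * N) = residueSum p q k N := by
  have h0 := nodeResidue_succ_nodeCubic_mul (k := k) hp.symm hq.symm N
  have h1 := nodeResidue_succ_nodeCubic_mul (k := k) hp hpq N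
  have h2 := nodeResidue_succ_nodeCubic_mul (k := k) hq hpq.symm N
  rw [(nodeCubic_rotate p q).1] at h1
  rw [(nodeCubic_rotate p q).2] at h2
  simp only [residueSum, LinearMap.add_apply, h0, h1, h2]

lemma nodeResidue_zero_one (a b c : ℂ) (N : ℂ[X]) :
    nodeResidue a b c 0 1 N = N.eval a * ((a - b) * (a - c))⁻¹ := by
  rw [nodeResidue_apply]
  simp [taylorSeries, PowerSeries.coeff_zero_eq_constantCoeff, PowerSeries.constantCoeff_inv,
    Polynomial.constantCoeff_coe, Polynomial.coeff_zero_eq_eval_zero]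

/-- A functional killing `1` and `X` kills linear polynomials. -/
lemma map_linear_eq_zero {l : ℂ[X] →ₗ[ℂ] ℂ} (h0 : l 1 = 0) (h1 : l X = 0) (r s : ℂ) :
    l (C r * X + C s) = 0 := by
  have : (C r * X + C s : ℂ[X]) = r • X + s • 1 := by simp [smul_eq_C_mul]
  rw [this, map_add, map_smul, map_smul, h0, h1]; simp

lemma residueSum_one_X (hp : p ≠ 0) (hq : q ≠ 0) (hpq : p ≠ q) (k : ℕ) :
    residueSum p q k 1 = 0 ∧ residueSum p q k X = 0 := by
  have hpq' : p - q ≠ 0 := sub_ne_zero.2 hpq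
  have hqp' : q - p ≠ 0 := sub_ne_zero.2 hpq.symm
  induction k with
  | zero =>
    simp only [residueSum, LinearMap.add_apply, nodeResidue_zero_one, eval_one, eval_X]
    constructor <;> · field_simp; ring
  | succ k ih =>
    set w₂ := 2 * (p ^ 2 - p * q + q ^ 2) with hw₂
    set w₁ := q * (p - q) * (2 * q - p) - 2 * p * (p ^ 2 - p * q + q ^ 2) with hw₁
    set w₀ := p * q * (p - q) ^ 2 with hw₀
    set u₀ := 2 * (p + q) * (p - q) ^ 2 - w₁ with hu₀
    have hk : ((k + 1 : ℕ) : ℂ) ≠ 0 := by exact_mod_cast Nat.succ_ne_zero k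
    have key : ∀ U V N : ℂ[X], residueSum p q k U = 0 → residueSum p q k (derivative V) = 0 →
        C ((p * q * (p - q)) ^ 2) * N = nodeCubic 0 p q * U + V * derivative (nodeCubic 0 p q) →
        residueSum p q (k + 1) N = 0 := by
      intro U V N hU hV h
      have h1 := residueSum_exact hp hq hpq (k + 1) V
      rw [map_sub, residueSum_succ_mul hp hq hpq, hV, zero_sub, neg_eq_zero] at h1
      have e : (((k + 1 : ℕ) : ℂ[X]) * (V * derivative (nodeCubic 0 p q))) =
          ((k + 1 : ℕ) : ℂ) • (V * derivative (nodeCubic 0 p q)) := by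
        rw [smul_eq_C_mul]; simp
      rw [e, map_smul, smul_eq_mul, mul_eq_zero, or_iff_right hk] at h1
      have h2 := congrArg (residueSum p q (k + 1)) h
      rw [map_add, residueSum_succ_mul hp hq hpq, hU, h1, ← smul_eq_C_mul, map_smul, add_zero,
        smul_eq_mul, mul_eq_zero] at h2
      exact h2.resolve_left (by positivity)
    have hA : nodeCubic 0 p q = X * ((X - C p) * (X - C q)) := by simp [nodeCubic]
    have hA' : derivative (nodeCubic 0 p q) =
        C 3 * X ^ 2 - C (2 * (p + q)) * X + C (p * q) := by
      rw [hA]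
      simp only [derivative_mul, derivative_X, derivative_sub, derivative_C, map_mul, map_add,
        map_ofNat]
      ring
    constructor
    · refine key (C (-3 * w₂) * X + C u₀) (C w₂ * X ^ 2 + C w₁ * X + C w₀) 1
        (map_linear_eq_zero ih.1 ih.2 _ _) ?_ ?_
      · have : derivative (C w₂ * X ^ 2 + C w₁ * X + C w₀) = C (2 * w₂) * X + C w₁ := by
          simp only [derivative_add, derivative_mul, derivative_C, derivative_X_pow, derivative_X,
            map_mul, map_ofNat, Nat.cast_ofNat]
          ring
        rw [this]
        exact map_linear_eq_zero ih.1 ih.2 _ _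
      · rw [hA', hA, hu₀, hw₀, hw₁, hw₂]
        simp only [map_mul, map_add, map_sub, map_pow, map_neg, map_ofNat]
        ring
    · refine key (C (u₀ - 2 * w₂ * (p + q)) * X + C (w₂ * (p * q)))
        (C (w₁ + w₂ * (p + q)) * X ^ 2 + C (w₀ - w₂ * (p * q)) * X) X
        (map_linear_eq_zero ih.1 ih.2 _ _) ?_ ?_
      · have : derivative (C (w₁ + w₂ * (p + q)) * X ^ 2 + C (w₀ - w₂ * (p * q)) * X) =
            C (2 * (w₁ + w₂ * (p + q))) * X + C (w₀ - w₂ * (p * q)) := by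
          simp only [derivative_add, derivative_mul, derivative_C, derivative_X_pow, derivative_X,
            map_mul, map_ofNat, Nat.cast_ofNat]
          ring
        rw [this]
        exact map_linear_eq_zero ih.1 ih.2 _ _
      · rw [hA', hA, hu₀, hw₀, hw₁, hw₂]
        simp only [map_mul, map_add, map_sub, map_pow, map_ofNat]
        ring

/-- The residues of `z ^ n / nodeCubic(z) ^ (k + 1)` sum to zero when `n ≤ 3 k + 1`. -/
lemma residueSum_X_pow (hp : p ≠ 0) (hq : q ≠ 0) (hpq : p ≠ q) (k n : ℕ) (hn : n ≤ 3 * k + 1) :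
    residueSum p q k (X ^ n) = 0 := by
  induction n using Nat.strong_induction_on with
  | _ n ih =>
    match n, ih, hn with
    | 0, _, _ => simpa using (residueSum_one_X hp hq hpq k).1
    | 1, _, _ => simpa using (residueSum_one_X hp hq hpq k).2
    | r + 2, ih, hn =>
      have h := residueSum_exact hp hq hpq k (X ^ r)
      have e : nodeCubic 0 p q * derivative (X ^ r) -
          (k : ℂ[X]) * (X ^ r * derivative (nodeCubic 0 p q)) =
          ((r : ℂ) - 3 * k) • X ^ (r + 2) + ((p + q) * (2 * k - r)) • X ^ (r + 1) +
            (p * q * (r - k)) • X ^ r := by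
        have hr : X * derivative (X ^ r : ℂ[X]) = (r : ℂ[X]) * X ^ r := by
          cases r with
          | zero => simp
          | succ r => simp; ring
        have hA : nodeCubic 0 p q = X * ((X - C p) * (X - C q)) := by simp [nodeCubic]
        have hA' : derivative (nodeCubic 0 p q) =
            3 * X ^ 2 - C (2 * (p + q)) * X + C (p * q) := by
          rw [hA]
          simp only [derivative_mul, derivative_X, derivative_sub, derivative_C, map_mul, map_add,
            map_ofNat]
          ring
        rw [hA', hA]
        simp only [smul_eq_C_mul, map_mul, map_add, map_sub, map_ofNat, map_natCast]
        linear_combination ((X - C p) * (X - C q)) * hr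
      rw [e, map_add, map_add, map_smul, map_smul, map_smul, ih (r + 1) (by lia) (by lia),
        ih r (by lia) (by lia)] at h
      simp only [smul_eq_mul, mul_zero, add_zero, mul_eq_zero] at h
      refine h.resolve_left ?_
      rw [← ne_eq, sub_ne_zero]
      norm_cast
      lia

end ResidueSum

/-- A weight that satisfies the differential equation of `(T + a + t) ^ (k + 1 / 2)`. -/
def IsHalfPower (k : ℕ) (u : ℂ) (G : PowerSeries ℂ) : Prop :=
  PowerSeries.constantCoeff G ≠ 0 ∧
    PowerSeries.derivative ℂ ((PowerSeries.X + PowerSeries.C u) * G) =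
      PowerSeries.C ((k : ℂ) + 3 / 2) * G

lemma nodeResidue_mul_cubic_pow_self (hab : a ≠ b) (hac : a ≠ c) :
    nodeResidue a b c k G (nodeCubic a b c ^ k * ((X - C b) * (X - C c))) =
      PowerSeries.constantCoeff G := by
  have hB := coe_mul_inv_eq_one hab hac
  have e : taylorSeries a (nodeCubic a b c ^ k * ((X - C b) * (X - C c))) = PowerSeries.X ^ k *
      (((X + C (a - b)) * (X + C (a - c)) : ℂ[X]) : PowerSeries ℂ) ^ (k + 1) := by
    rw [taylorSeries, mul_comp, pow_comp, nodeCubic_comp, mul_pow]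
    simp only [coe_mul, coe_pow, mul_comp, sub_comp, X_comp, C_comp, coe_add, coe_sub, coe_X,
      coe_C, map_sub]
    ring
  rw [nodeResidue_apply, e]
  set B := (((X + C (a - b)) * (X + C (a - c)) : ℂ[X]) : PowerSeries ℂ)
  have : G * (PowerSeries.X ^ k * B ^ (k + 1)) * B⁻¹ ^ (k + 1) = PowerSeries.X ^ k * G := by
    rw [show G * (PowerSeries.X ^ k * B ^ (k + 1)) * B⁻¹ ^ (k + 1) =
      PowerSeries.X ^ k * G * (B * B⁻¹) ^ (k + 1) by ring, hB]
    simp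
  rw [this, ← zero_add k, PowerSeries.coeff_X_pow_mul', zero_add]
  simp

lemma nodeResidue_mul_cubic_pow_other (N : ℂ[X]) :
    nodeResidue a b c k G (nodeCubic a b c ^ k * ((X - C a) * N)) = 0 := by
  obtain ⟨M, hM⟩ : ∃ M, taylorSeries a (nodeCubic a b c ^ k * ((X - C a) * N)) =
      PowerSeries.X ^ (k + 1) * M := by
    refine ⟨(((X + C (a - b)) * (X + C (a - c)) : ℂ[X]) : PowerSeries ℂ) ^ k * taylorSeries a N, ?_⟩
    rw [taylorSeries, mul_comp, pow_comp, nodeCubic_comp, mul_pow]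
    simp only [coe_mul, coe_pow, mul_comp, sub_comp, X_comp, C_comp, coe_add, coe_sub, coe_X,
      coe_C, map_sub, taylorSeries]
    ring
  rw [nodeResidue_apply, hM, show ∀ B : PowerSeries ℂ, G * (PowerSeries.X ^ (k + 1) * M) * B =
    PowerSeries.X ^ (k + 1) * (G * M * B) from fun B => by ring, PowerSeries.coeff_X_pow_mul',
    if_neg (by lia)]

/-- The three linear forms obtained from `N = 1, X, X ^ 2` are linearly independent. -/
lemma eq_zero_of_nodeResidue_combination {p q T : ℂ} (hp : p ≠ 0) (hq : q ≠ 0) (hpq : p ≠ q)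
    {k : ℕ} {G₀ G₁ G₂ : PowerSeries ℂ} (hG₀ : IsHalfPower k (T + 0) G₀)
    (hG₁ : IsHalfPower k (T + p) G₁) (hG₂ : IsHalfPower k (T + q) G₂) {v₀ v₁ v₂ : ℂ}
    (h : ∀ i < 3, v₀ * nodeResidue 0 p q k G₀ (X ^ i) + v₁ * nodeResidue p 0 q k G₁ (X ^ i) +
      v₂ * nodeResidue q 0 p k G₂ (X ^ i) = 0) : v₀ = 0 ∧ v₁ = 0 ∧ v₂ = 0 := by
  set l : ℂ[X] →ₗ[ℂ] ℂ := v₀ • nodeResidue 0 p q k G₀ + v₁ • nodeResidue p 0 q k G₁ +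
    v₂ • nodeResidue q 0 p k G₂ with hl
  have hle : ∀ R : ℂ[X], l (C ((k : ℂ) + 3 / 2) * (R * nodeCubic 0 p q) + (X + C T) *
      (nodeCubic 0 p q * derivative R - (k : ℂ[X]) * (R * derivative (nodeCubic 0 p q)))) = 0 := by
    intro R
    have h0 := nodeResidue_exact hp.symm hq.symm hG₀.2 R (k := k)
    have h1 := nodeResidue_exact hp hpq hG₁.2 R (k := k)
    have h2 := nodeResidue_exact hq hpq.symm hG₂.2 R (k := k)
    rw [(nodeCubic_rotate p q).1] at h1
    rw [(nodeCubic_rotate p q).2] at h2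
    simp only [hl, LinearMap.add_apply, LinearMap.smul_apply, h0, h1, h2, smul_zero, add_zero]
  have hpow : ∀ n, l (X ^ n) = 0 := by
    intro n
    induction n using Nat.strong_induction_on with
    | _ n ih =>
      by_cases hn : n < 3
      · simpa [hl] using h n hn
      · obtain ⟨r, rfl⟩ : ∃ r, n = r + 3 := ⟨n - 3, by lia⟩
        have h := hle (X ^ r)
        set s : ℂ := k + 3 / 2 with hs
        have e : C s * (X ^ r * nodeCubic 0 p q) + (X + C T) *
            (nodeCubic 0 p q * derivative (X ^ r) -
              (k : ℂ[X]) * (X ^ r * derivative (nodeCubic 0 p q))) =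
            (s + r - 3 * k) • X ^ (r + 3) +
            (T * (r - 3 * k) + (p + q) * (2 * k - r - s)) • X ^ (r + 2) +
            (T * (p + q) * (2 * k - r) + p * q * (s + r - k)) • X ^ (r + 1) +
            (T * (p * q) * (r - k)) • X ^ r := by
          have hr : X * derivative (X ^ r : ℂ[X]) = (r : ℂ[X]) * X ^ r := by
            cases r with
            | zero => simp
            | succ r => simp; ring
          have hA : nodeCubic 0 p q = X * ((X - C p) * (X - C q)) := by simp [nodeCubic]
          have hA' : derivative (nodeCubic 0 p q) =
              3 * X ^ 2 - C (2 * (p + q)) * X + C (p * q) := by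
            rw [hA]
            simp only [derivative_mul, derivative_X, derivative_sub, derivative_C, map_mul,
              map_add, map_ofNat]
            ring
          rw [hA', hA]
          simp only [smul_eq_C_mul, map_mul, map_add, map_sub, map_ofNat, map_natCast]
          linear_combination ((X + C T) * ((X - C p) * (X - C q))) * hr
        rw [e, map_add, map_add, map_add, map_smul, map_smul, map_smul, map_smul,
          ih (r + 2) (by lia), ih (r + 1) (by lia), ih r (by lia)] at h
        simp only [smul_eq_mul, mul_zero, add_zero, mul_eq_zero] at h
        refine h.resolve_left fun h0 => ?_
        have : ((2 * r + 3 : ℕ) : ℂ) = ((4 * k : ℕ) : ℂ) := by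
          push_cast
          linear_combination 2 * h0 - 2 * hs
        have := Nat.cast_injective this
        lia
  have hall : ∀ N : ℂ[X], l N = 0 := by
    intro N
    induction N using Polynomial.induction_on' with
    | add f g hf hg => rw [map_add, hf, hg, add_zero]
    | monomial n r => rw [← smul_X_eq_monomial, map_smul, hpow, smul_zero]
  have e0 := hall (nodeCubic 0 p q ^ k * ((X - C p) * (X - C q)))
  have e1 := hall (nodeCubic 0 p q ^ k * ((X - C 0) * (X - C q)))
  have e2 := hall (nodeCubic 0 p q ^ k * ((X - C 0) * (X - C p)))
  simp only [hl, LinearMap.add_apply, LinearMap.smul_apply, smul_eq_mul] at e0 e1 e2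
  have r1 := (nodeCubic_rotate p q).1
  have r2 := (nodeCubic_rotate p q).2
  have s0 := nodeResidue_mul_cubic_pow_self (k := k) (G := G₀) hp.symm hq.symm
  have s1 := nodeResidue_mul_cubic_pow_self (k := k) (G := G₁) hp hpq
  have s2 := nodeResidue_mul_cubic_pow_self (k := k) (G := G₂) hq hpq.symm
  have o0 := fun N => nodeResidue_mul_cubic_pow_other (a := 0) (b := p) (c := q) (k := k)
    (G := G₀) N
  have o1 := fun N => nodeResidue_mul_cubic_pow_other (a := p) (b := 0) (c := q) (k := k)
    (G := G₁) N
  have o2 := fun N => nodeResidue_mul_cubic_pow_other (a := q) (b := 0) (c := p) (k := k)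
    (G := G₂) N
  rw [r1] at s1
  rw [r2] at s2
  simp only [r1] at o1
  simp only [r2] at o2
  rw [s0, o1, mul_comm (X - C p), o2] at e0
  rw [o0, s1, mul_comm (X - C 0), o2] at e1
  rw [o0, mul_comm (X - C 0), o1, mul_comm (X - C p), s2] at e2
  simp only [mul_zero, add_zero, zero_add, mul_eq_zero, hG₀.1, hG₁.1, hG₂.1, or_false] at e0 e1 e2
  exact ⟨e0, e1, e2⟩

end NodeResidue

section HalfBinomial

lemma succ_mul_ringChoose_succ (r : ℂ) (n : ℕ) :
    ((n : ℂ) + 1) * Ring.choose r (n + 1) = (r - n) * Ring.choose r n := by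
  have h := Ring.choose_smul_choose r (Nat.le_succ n)
  rw [Nat.succ_eq_add_one, Nat.choose_succ_self_right, nsmul_eq_mul, Nat.add_sub_cancel_left,
    Ring.choose_one_right] at h
  push_cast at h
  rw [h, mul_comm]

lemma four_pow_mul_choose_neg_half (n : ℕ) :
    (4 : ℂ) ^ n * Ring.choose (-1 / 2 : ℂ) n = (-1) ^ n * n.centralBinom := by
  induction n with
  | zero => simp
  | succ n ih =>
    have h1 := succ_mul_ringChoose_succ (-1 / 2) n
    have h2 : ((n : ℂ) + 1) * (n + 1).centralBinom = 2 * (2 * n + 1) * n.centralBinom := by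
      exact_mod_cast congrArg (Nat.cast (R := ℂ)) (Nat.succ_mul_centralBinom_succ n)
    have hn : (n : ℂ) + 1 ≠ 0 := Nat.cast_add_one_ne_zero n
    apply mul_left_cancel₀ hn
    rw [pow_succ, pow_succ]
    linear_combination (4 ^ n * 4) * h1 + 4 * (-1 / 2 - n) * ih + (-1) ^ n * h2

/-- The denominators of the binomial coefficients of `k + 1 / 2` are powers of `4`. -/
lemma four_pow_mul_choose_half_mem (O : Subring ℂ) (k n : ℕ) :
    (4 : ℂ) ^ n * Ring.choose ((k : ℂ) + 1 / 2) n ∈ O := by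
  have step : ∀ r : ℂ, (∀ n : ℕ, (4 : ℂ) ^ n * Ring.choose r n ∈ O) →
      ∀ n : ℕ, (4 : ℂ) ^ n * Ring.choose (r + 1) n ∈ O := by
    intro r hr n
    cases n with
    | zero => simp
    | succ n =>
      rw [Ring.choose_succ_succ, mul_add, pow_succ' _ n, mul_assoc, ← pow_succ']
      exact O.add_mem (O.mul_mem (by exact_mod_cast natCast_mem O 4) (hr n)) (hr (n + 1))
  have base : ∀ n : ℕ, (4 : ℂ) ^ n * Ring.choose (-1 / 2 : ℂ) n ∈ O := by
    intro n
    rw [four_pow_mul_choose_neg_half]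
    exact O.mul_mem (O.pow_mem (O.neg_mem O.one_mem) n) (natCast_mem O _)
  have all : ∀ k : ℕ, ∀ n : ℕ, (4 : ℂ) ^ n * Ring.choose ((k : ℂ) + 1 / 2) n ∈ O := by
    intro k
    induction k with
    | zero => simpa [show (-1 / 2 + 1 : ℂ) = 2⁻¹ by norm_num] using step _ base
    | succ k ih =>
      rw [show ((k + 1 : ℕ) : ℂ) + 1 / 2 = k + 1 / 2 + 1 by push_cast; ring]
      exact step _ ih
  exact all k n

lemma norm_choose_half_le (k n : ℕ) : ‖Ring.choose ((k : ℂ) + 1 / 2) n‖ ≤ 2 ^ k := by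
  induction k generalizing n with
  | zero =>
    induction n with
    | zero => simp
    | succ n ih =>
      have h := congrArg norm (succ_mul_ringChoose_succ (((0 : ℕ) : ℂ) + 1 / 2) n)
      rw [norm_mul, norm_mul, show ((n : ℂ) + 1) = ((n + 1 : ℝ) : ℂ) by push_cast; rfl,
        show ((0 : ℕ) : ℂ) + 1 / 2 - n = ((1 / 2 - n : ℝ) : ℂ) by push_cast; ring,
        Complex.norm_real, Complex.norm_real, Real.norm_of_nonneg (by positivity)] at h
      have h3 : ‖(1 / 2 - n : ℝ)‖ ≤ n + 1 := by
        rw [Real.norm_eq_abs, abs_le]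
        constructor <;> linarith [(Nat.cast_nonneg n : (0 : ℝ) ≤ n)]
      rw [pow_zero] at ih ⊢
      have hn : (0 : ℝ) < n + 1 := by positivity
      refine le_of_mul_le_mul_left ?_ hn
      rw [h]
      exact mul_le_mul h3 ih (norm_nonneg _) hn.le
  | succ k ih =>
    rw [show ((k + 1 : ℕ) : ℂ) + 1 / 2 = k + 1 / 2 + 1 by push_cast; ring]
    cases n with
    | zero => simpa using one_le_pow₀ (by norm_num : (1 : ℝ) ≤ 2)
    | succ n =>
      rw [Ring.choose_succ_succ]
      calc _ ≤ _ := norm_add_le _ _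
        _ ≤ 2 ^ k + 2 ^ k := add_le_add (ih n) (ih (n + 1))
        _ = 2 ^ (k + 1) := by ring

/-- The Taylor expansion at `0` of `(u + t) ^ (k + 1 / 2)` divided by `u ^ (1 / 2)`. -/
noncomputable def halfPower (k : ℕ) (u : ℂ) : PowerSeries ℂ :=
  PowerSeries.mk fun h => Ring.choose ((k : ℂ) + 1 / 2) h * u ^ ((k : ℤ) - h)

lemma isHalfPower_halfPower (k : ℕ) {u : ℂ} (hu : u ≠ 0) : IsHalfPower k u (halfPower k u) := by
  constructor
  · simp [halfPower, ← PowerSeries.coeff_zero_eq_constantCoeff_apply, hu]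
  · ext n
    have hz : u * u ^ ((k : ℤ) - (n + 1 : ℕ)) = u ^ ((k : ℤ) - n) := by
      rw [← zpow_one_add₀ hu]; congr 1; push_cast; ring
    have h := succ_mul_ringChoose_succ ((k : ℂ) + 1 / 2) n
    rw [PowerSeries.coeff_derivative, add_mul, map_add, PowerSeries.coeff_succ_X_mul,
      PowerSeries.coeff_C_mul, PowerSeries.coeff_C_mul]
    simp only [halfPower, PowerSeries.coeff_mk]
    linear_combination (u * u ^ ((k : ℤ) - (n + 1 : ℕ))) * h +
      ((k : ℂ) + 1 / 2 - n) * Ring.choose ((k : ℂ) + 1 / 2) n * hz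

lemma hasSum_one_add_cpow (α : ℂ) {x : ℂ} (hx : ‖x‖ < 1) :
    HasSum (fun n : ℕ => Ring.choose α n * x ^ n) ((1 + x) ^ α) := by
  have h := (Complex.one_add_cpow_hasFPowerSeriesOnBall_zero (a := α)).hasSum (y := x)
    (by rwa [Metric.mem_eball, edist_zero_right, ← ofReal_norm, ENNReal.ofReal_lt_one])
  simpa only [zero_add, binomialSeries_apply, List.ofFn_const, List.prod_replicate,
    smul_eq_mul] using h

/-- The expansion of a coefficient of `(T + a + t) ^ (k + 1 / 2)` in powers of `T⁻¹`. -/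
lemma hasSum_coeff_halfPower (k h : ℕ) {T a : ℂ} (hT : T ≠ 0) (ha : ‖a / T‖ < 1) :
    HasSum (fun m : ℕ => T ^ k * Ring.choose ((k : ℂ) + 1 / 2) m * T⁻¹ ^ m *
        PowerSeries.coeff h (taylorSeries a (Polynomial.X ^ m)))
      ((1 + a / T) ^ (1 / 2 : ℂ) * PowerSeries.coeff h (halfPower k (T + a))) := by
  have h1 : (1 + a / T) ≠ 0 := by
    intro h0
    have : a / T = -1 := by linear_combination h0
    rw [this] at ha; simp at ha
  have hc : ∀ m, PowerSeries.coeff h (taylorSeries a (Polynomial.X ^ m)) =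
      a ^ (m - h) * (m.choose h : ℂ) := by
    intro m
    rw [taylorSeries, Polynomial.coeff_coe, Polynomial.pow_comp, Polynomial.X_comp,
      Polynomial.coeff_X_add_C_pow]
  have hs := (hasSum_one_add_cpow ((k : ℂ) + 1 / 2 - h) ha).mul_left
    (T ^ ((k : ℤ) - h) * Ring.choose ((k : ℂ) + 1 / 2) h)
  rw [← hasSum_nat_add_iff' h, Finset.sum_eq_zero, sub_zero]
  · convert! hs using 1
    · ext n
      have e := Ring.choose_smul_choose ((k : ℂ) + 1 / 2) (Nat.le_add_left h n)
      rw [nsmul_eq_mul, Nat.add_sub_cancel] at e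
      rw [hc, Nat.add_sub_cancel, div_pow, zpow_sub₀ hT, zpow_natCast, zpow_natCast]
      rw [mul_assoc (T ^ (k : ℕ) / T ^ h), ← mul_assoc (Ring.choose _ h), ← e,
          pow_add, inv_pow, inv_pow]
      field_simp
    · rw [halfPower, PowerSeries.coeff_mk, show T + a = T * (1 + a / T) by field_simp, mul_zpow,
        show ((k : ℂ) + 1 / 2 - h) = 1 / 2 + (((k : ℤ) - h : ℤ) : ℂ) by push_cast; ring,
        Complex.cpow_add _ _ h1, Complex.cpow_intCast]
      ring
  · intro m hm
    rw [hc, Nat.choose_eq_zero_of_lt (Finset.mem_range.1 hm)]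
    simp

/-- The expansion of a weighted residue in powers of `T⁻¹`. -/
lemma hasSum_nodeResidue_halfPower (k i : ℕ) {T a : ℂ} (b c : ℂ) (hT : T ≠ 0) (ha : ‖a / T‖ < 1) :
    HasSum (fun m : ℕ => T ^ k * Ring.choose ((k : ℂ) + 1 / 2) m * T⁻¹ ^ m *
        nodeResidue a b c k 1 (Polynomial.X ^ (m + i)))
      ((1 + a / T) ^ (1 / 2 : ℂ) *
        nodeResidue a b c k (halfPower k (T + a)) (Polynomial.X ^ i)) := by
  simp only [nodeResidue_apply, pow_add Polynomial.X, taylorSeries_mul, one_mul, mul_assoc]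
  simp only [PowerSeries.coeff_mul k, Finset.mul_sum]
  refine hasSum_sum fun p _ => ?_
  have := (hasSum_coeff_halfPower k p.1 hT ha).mul_right (PowerSeries.coeff p.2
    (taylorSeries a (Polynomial.X ^ i) * ((((Polynomial.X + Polynomial.C (a - b)) *
      (Polynomial.X + Polynomial.C (a - c)) : Polynomial ℂ) : PowerSeries ℂ)⁻¹) ^ (k + 1)))
  simpa only [mul_assoc] using this

end HalfBinomial

section WeightedNorm

/-- The `ℓ¹` norm with weights `2 ^ (-n)` of the first `k + 1` coefficients. -/
noncomputable def weightedNorm (k : ℕ) (F : PowerSeries ℂ) : ℝ :=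
  ∑ n ∈ Finset.range (k + 1), ‖PowerSeries.coeff n F‖ * (1 / 2) ^ n

variable (k : ℕ)

lemma weightedNorm_nonneg (F : PowerSeries ℂ) : 0 ≤ weightedNorm k F :=
  Finset.sum_nonneg fun _ _ => by positivity

lemma norm_coeff_le_weightedNorm (F : PowerSeries ℂ) :
    ‖PowerSeries.coeff k F‖ ≤ 2 ^ k * weightedNorm k F := by
  have h : ‖PowerSeries.coeff k F‖ * (1 / 2) ^ k ≤ weightedNorm k F :=
    Finset.single_le_sum (f := fun n => ‖PowerSeries.coeff n F‖ * (1 / 2) ^ n)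
      (fun _ _ => by positivity) (Finset.self_mem_range_succ k)
  calc _ = 2 ^ k * (‖PowerSeries.coeff k F‖ * (1 / 2) ^ k) := by
        rw [mul_left_comm, ← mul_pow]; norm_num
    _ ≤ _ := by gcongr

lemma weightedNorm_mul (F G : PowerSeries ℂ) :
    weightedNorm k (F * G) ≤ weightedNorm k F * weightedNorm k G := by
  rw [weightedNorm, weightedNorm, weightedNorm, Finset.sum_mul_sum, ← Finset.sum_product']
  refine le_trans (Finset.sum_le_sum fun n hn => ?_)
    (Finset.sum_fiberwise_le_sum_of_sum_fiber_nonneg (t := Finset.range (k + 1))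
      (g := fun p : ℕ × ℕ => p.1 + p.2) fun _ _ => Finset.sum_nonneg fun _ _ => by positivity)
  rw [PowerSeries.coeff_mul]
  calc _ ≤ (∑ p ∈ Finset.HasAntidiagonal.antidiagonal n,
        ‖PowerSeries.coeff p.1 F * PowerSeries.coeff p.2 G‖) *
        (1 / 2) ^ n := by gcongr; exact norm_sum_le _ _
    _ = ∑ p ∈ Finset.HasAntidiagonal.antidiagonal n, ‖PowerSeries.coeff p.1 F‖ * (1 / 2) ^ p.1 *
          (‖PowerSeries.coeff p.2 G‖ * (1 / 2) ^ p.2) := by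
        rw [Finset.sum_mul]
        refine Finset.sum_congr rfl fun p hp => ?_
        rw [← Finset.HasAntidiagonal.mem_antidiagonal.1 hp, norm_mul, pow_add]
        ring
    _ ≤ _ := by
        refine Finset.sum_le_sum_of_subset_of_nonneg (fun p hp => ?_) fun _ _ _ => by positivity
        have h1 := Finset.HasAntidiagonal.mem_antidiagonal.1 hp
        have h2 := Finset.mem_range.1 hn
        simp only [Finset.mem_filter, Finset.mem_product, Finset.mem_range]
        lia

lemma weightedNorm_one : weightedNorm k 1 = 1 := by
  rw [weightedNorm, Finset.sum_eq_single 0]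
  · simp
  · intro n _ hn; simp [PowerSeries.coeff_one, hn]
  · simp

lemma weightedNorm_pow (F : PowerSeries ℂ) (n : ℕ) :
    weightedNorm k (F ^ n) ≤ weightedNorm k F ^ n := by
  induction n with
  | zero => simp [weightedNorm_one]
  | succ n ih =>
    rw [pow_succ, pow_succ]
    exact (weightedNorm_mul k _ _).trans
      (mul_le_mul_of_nonneg_right ih (weightedNorm_nonneg k F))

lemma sum_half_pow_le (n : ℕ) : ∑ i ∈ Finset.range n, (1 / 2 : ℝ) ^ i ≤ 2 :=
  sum_geometric_two_le n

lemma weightedNorm_X_add_C (a : ℂ) :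
    weightedNorm k (PowerSeries.X + PowerSeries.C a) ≤ ‖a‖ + 1 / 2 := by
  have h : ∀ n, ‖PowerSeries.coeff n (PowerSeries.X + PowerSeries.C a)‖ * (1 / 2) ^ n ≤
      (if n = 0 then ‖a‖ else 0) + (if n = 1 then 1 / 2 else 0) := by
    intro n
    match n with
    | 0 => simp
    | 1 => simp
    | n + 2 => simp [PowerSeries.coeff_X]
  refine (Finset.sum_le_sum fun n _ => h n).trans ?_
  rw [Finset.sum_add_distrib, Finset.sum_ite_eq', Finset.sum_ite_eq']
  gcongr
  · split_ifs <;> simp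
  · split_ifs <;> simp

lemma coe_X_add_C_inv {d : ℂ} (hd : d ≠ 0) : (((Polynomial.X + Polynomial.C d : Polynomial ℂ)) :
    PowerSeries ℂ)⁻¹ = PowerSeries.mk fun n => (-1) ^ n * (d⁻¹) ^ (n + 1) := by
  rw [PowerSeries.inv_eq_iff_mul_eq_one (by simpa)]
  simp only [Polynomial.coe_add, Polynomial.coe_X, Polynomial.coe_C]
  ext n
  rw [mul_add, map_add, PowerSeries.coeff_mul_C]
  cases n with
  | zero => simp [hd]
  | succ n =>
    rw [PowerSeries.coeff_succ_mul_X]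
    simp [PowerSeries.coeff_one]
    field_simp
    ring

lemma weightedNorm_inv {d : ℂ} (hd : 1 ≤ ‖d‖) :
    weightedNorm k ((Polynomial.X + Polynomial.C d : Polynomial ℂ) : PowerSeries ℂ)⁻¹ ≤ 2 := by
  have h0 : d ≠ 0 := norm_pos_iff.1 (by linarith)
  rw [coe_X_add_C_inv h0]
  refine (Finset.sum_le_sum fun n _ => ?_).trans (sum_half_pow_le (k + 1))
  rw [PowerSeries.coeff_mk, norm_mul, norm_pow, norm_neg, norm_one, one_pow, one_mul, norm_pow,
    norm_inv]
  exact mul_le_of_le_one_left (by positivity)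
    (pow_le_one₀ (by positivity) (inv_le_one_of_one_le₀ hd))

lemma weightedNorm_node_inv_pow {d e : ℂ} (hd : 1 ≤ ‖d‖) (he : 1 ≤ ‖e‖) :
    weightedNorm k (((((Polynomial.X + Polynomial.C d) * (Polynomial.X + Polynomial.C e) :
      Polynomial ℂ) : PowerSeries ℂ)⁻¹) ^ (k + 1)) ≤ 4 ^ (k + 1) := by
  refine (weightedNorm_pow k _ _).trans (pow_le_pow_left₀ (weightedNorm_nonneg k _) ?_ _)
  rw [Polynomial.coe_mul, PowerSeries.mul_inv_rev]
  refine (weightedNorm_mul k _ _).trans ?_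
  calc _ ≤ (2 : ℝ) * 2 := mul_le_mul (weightedNorm_inv k he) (weightedNorm_inv k hd)
        (weightedNorm_nonneg k _) (by norm_num)
    _ = 4 := by norm_num

lemma weightedNorm_taylorSeries_X_pow {a : ℂ} {M : ℝ} (hM : 1 ≤ M) (ha : ‖a‖ ≤ M) (n : ℕ) :
    weightedNorm k (taylorSeries a (Polynomial.X ^ n)) ≤ (2 * M) ^ n := by
  have e : taylorSeries a (Polynomial.X ^ n) = (PowerSeries.X + PowerSeries.C a) ^ n := by
    simp [taylorSeries]
  rw [e]
  refine (weightedNorm_pow k _ _).trans (pow_le_pow_left₀ (weightedNorm_nonneg k _) ?_ _)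
  linarith [weightedNorm_X_add_C k a]

lemma weightedNorm_halfPower {u : ℂ} {R : ℝ} (hu0 : u ≠ 0) (hu : ‖u‖ ≤ R) (hR : 1 ≤ R) :
    weightedNorm k (halfPower k u) ≤ 2 * (2 * R) ^ k := by
  have h : ∀ n ∈ Finset.range (k + 1), ‖PowerSeries.coeff n (halfPower k u)‖ * (1 / 2) ^ n ≤
      (2 * R) ^ k * (1 / 2) ^ n := by
    intro n hn
    have hn : n ≤ k := Nat.lt_succ_iff.1 (Finset.mem_range.1 hn)
    gcongr
    rw [halfPower, PowerSeries.coeff_mk, norm_mul, mul_pow,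
      show ((k : ℤ) - n) = ((k - n : ℕ) : ℤ) by lia, zpow_natCast, norm_pow]
    refine mul_le_mul (norm_choose_half_le k n) ?_ (by positivity) (by positivity)
    exact (pow_le_pow_left₀ (norm_nonneg _) hu _).trans (pow_le_pow_right₀ hR (Nat.sub_le k n))
  refine (Finset.sum_le_sum h).trans ?_
  rw [← Finset.mul_sum, mul_comm]
  gcongr
  exact sum_half_pow_le (k + 1)

/-- Size of a residue in terms of the weight. -/
lemma norm_nodeResidue_le {a b c : ℂ} {G : PowerSeries ℂ} {M : ℝ} (hM : 1 ≤ M) (ha : ‖a‖ ≤ M)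
    (hb : 1 ≤ ‖a - b‖) (hc : 1 ≤ ‖a - c‖) (n : ℕ) :
    ‖nodeResidue a b c k G (Polynomial.X ^ n)‖ ≤
      4 * 8 ^ k * (2 * M) ^ n * weightedNorm k G := by
  rw [nodeResidue_apply]
  refine (norm_coeff_le_weightedNorm k _).trans ?_
  calc _ ≤ 2 ^ k * (weightedNorm k G * (2 * M) ^ n * 4 ^ (k + 1)) := by
        gcongr
        refine (weightedNorm_mul k _ _).trans ?_
        gcongr
        · exact weightedNorm_nonneg k _
        · exact mul_nonneg (weightedNorm_nonneg k _) (by positivity)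
        · refine (weightedNorm_mul k _ _).trans ?_
          gcongr
          · exact weightedNorm_nonneg k _
          · exact weightedNorm_taylorSeries_X_pow k hM ha n
        · exact weightedNorm_node_inv_pow k hb hc
    _ = _ := by
        have h8 : (8 : ℝ) ^ k = 2 ^ k * 4 ^ k := by rw [← mul_pow]; norm_num
        rw [h8]; ring

end WeightedNorm

section Integrality

variable (O : Subring ℂ) (k : ℕ)

lemma coeff_mul_mem_of_forall_le {F G : PowerSeries ℂ} {r s : ℂ} {n : ℕ}
    (hF : ∀ m ≤ n, r * PowerSeries.coeff m F ∈ O) (hG : ∀ m ≤ n, s * PowerSeries.coeff m G ∈ O) :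
    r * s * PowerSeries.coeff n (F * G) ∈ O := by
  rw [PowerSeries.coeff_mul, Finset.mul_sum]
  refine O.sum_mem fun p hp => ?_
  have h := Finset.HasAntidiagonal.mem_antidiagonal.1 hp
  rw [mul_mul_mul_comm]
  exact O.mul_mem (hF _ (by lia)) (hG _ (by lia))

lemma coeff_node_inv_mem {d e D : ℂ} (hd : d ∈ O) (he : e ∈ O) (hd0 : d ≠ 0) (he0 : e ≠ 0)
    (hD : ∃ r ∈ O, D = d * e * r) (n : ℕ) : D ^ (n + 1) * PowerSeries.coeff n
      ((((Polynomial.X + Polynomial.C d) * (Polynomial.X + Polynomial.C e) : Polynomial ℂ) :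
        PowerSeries ℂ)⁻¹) ∈ O := by
  obtain ⟨r, hr, rfl⟩ := hD
  rw [Polynomial.coe_mul, PowerSeries.mul_inv_rev, coe_X_add_C_inv hd0, coe_X_add_C_inv he0,
    PowerSeries.coeff_mul, Finset.mul_sum]
  refine O.sum_mem fun p hp => ?_
  have e1 : (d * e * r) ^ (n + 1) * (PowerSeries.coeff p.1 (PowerSeries.mk fun n =>
      (-1) ^ n * (e⁻¹) ^ (n + 1)) * PowerSeries.coeff p.2 (PowerSeries.mk fun n =>
      (-1) ^ n * (d⁻¹) ^ (n + 1))) =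
      (-1) ^ p.1 * (-1) ^ p.2 * (r ^ (n + 1) * (d ^ p.1 * e ^ p.2)) := by
    rw [← Finset.HasAntidiagonal.mem_antidiagonal.1 hp, PowerSeries.coeff_mk, PowerSeries.coeff_mk]
    simp only [mul_pow, inv_pow, pow_succ, pow_add]
    field_simp
  rw [e1]
  have h1 : ∀ n, (-1 : ℂ) ^ n ∈ O := fun n => O.pow_mem (O.neg_mem O.one_mem) n
  exact O.mul_mem (O.mul_mem (h1 _) (h1 _)) (O.mul_mem (O.pow_mem hr _)
    (O.mul_mem (O.pow_mem hd _) (O.pow_mem he _)))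

lemma coeff_pow_mem {F : PowerSeries ℂ} {D : ℂ}
    (hF : ∀ n, D ^ (n + 1) * PowerSeries.coeff n F ∈ O) (j n : ℕ) :
    D ^ (n + j) * PowerSeries.coeff n (F ^ j) ∈ O := by
  induction j generalizing n with
  | zero =>
    rw [pow_zero, PowerSeries.coeff_one]
    split_ifs with h
    · simp [h]
    · simp
  | succ j ih =>
    rw [pow_succ, PowerSeries.coeff_mul, Finset.mul_sum]
    refine O.sum_mem fun p hp => ?_
    rw [show n + (j + 1) = (p.1 + j) + (p.2 + 1) by
        rw [← Finset.HasAntidiagonal.mem_antidiagonal.1 hp]; ring,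
      pow_add, mul_mul_mul_comm]
    exact O.mul_mem (ih _) (hF _)

/-- The denominators of the residues. -/
lemma nodeResidue_halfPower_mem {T a b c D : ℂ} (hT : T ∈ O) (ha : a ∈ O) (hb : b ∈ O)
    (hc : c ∈ O) (hab : a ≠ b) (hac : a ≠ c) (hD : ∃ r ∈ O, D = (a - b) * (a - c) * r) (i : ℕ) :
    4 ^ k * D ^ (2 * k + 1) *
      nodeResidue a b c k (halfPower k (T + a)) (Polynomial.X ^ i) ∈ O := by
  have hDO : D ∈ O := by
    obtain ⟨r, hr, rfl⟩ := hD
    exact O.mul_mem (O.mul_mem (O.sub_mem ha hb) (O.sub_mem ha hc)) hr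
  have h4 : (4 : ℂ) ∈ O := by exact_mod_cast natCast_mem O 4
  rw [nodeResidue_apply]
  refine coeff_mul_mem_of_forall_le O (fun m hm => ?_) fun m hm => ?_
  · rw [← mul_one ((4 : ℂ) ^ k)]
    refine coeff_mul_mem_of_forall_le O (fun n hn => ?_) fun n hn => ?_
    · rw [halfPower, PowerSeries.coeff_mk, show ((k : ℤ) - n) = ((k - n : ℕ) : ℤ) by lia,
        zpow_natCast, ← mul_assoc, ← Nat.sub_add_cancel (hn.trans hm), pow_add, mul_assoc (4 ^ _),
        Nat.sub_add_cancel (hn.trans hm)]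
      exact O.mul_mem (O.mul_mem (O.pow_mem h4 _) (four_pow_mul_choose_half_mem O k n))
        (O.pow_mem (O.add_mem hT ha) _)
    · rw [one_mul, taylorSeries, Polynomial.coeff_coe, Polynomial.pow_comp, Polynomial.X_comp,
        Polynomial.coeff_X_add_C_pow]
      exact O.mul_mem (O.pow_mem ha _) (natCast_mem O _)
  · have h := coeff_pow_mem O (coeff_node_inv_mem O (O.sub_mem ha hb) (O.sub_mem ha hc)
      (sub_ne_zero.2 hab) (sub_ne_zero.2 hac) hD) (k + 1) m
    rw [show 2 * k + 1 = (k - m) + (m + (k + 1)) by lia, pow_add, mul_assoc]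
    exact O.mul_mem (O.pow_mem hDO _) h

end Integrality

section Approximation

lemma norm_le_of_hasSum_geometric {f : ℕ → ℂ} {S : ℂ} {C r : ℝ} {n : ℕ} (hf : HasSum f S)
    (h0 : ∀ m < n, f m = 0) (hr0 : 0 ≤ r) (hr : r ≤ 1 / 2) (hb : ∀ m, ‖f m‖ ≤ C * r ^ m) :
    ‖S‖ ≤ 2 * C * r ^ n := by
  rw [← hasSum_nat_add_iff' n, Finset.sum_eq_zero fun m hm => h0 m (Finset.mem_range.1 hm),
    sub_zero] at hf
  have hC : 0 ≤ C := by simpa using (norm_nonneg _).trans (hb 0)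
  have hg := (hasSum_geometric_two).mul_left (C * r ^ n)
  have := hf.norm_le_of_bounded hg fun m => (hb (m + n)).trans <| by
    rw [pow_add, mul_comm (r ^ m), ← mul_assoc]; gcongr
  linarith

variable {O : Subring ℂ} {T p q : ℂ} {M : ℝ}

lemma norm_residueSum_X_pow_le (hM : 1 ≤ M) (hp : ‖p‖ ≤ M) (hq : ‖q‖ ≤ M) (hp1 : 1 ≤ ‖p‖)
    (hq1 : 1 ≤ ‖q‖) (hpq : 1 ≤ ‖p - q‖) (k n : ℕ) :
    ‖residueSum p q k (Polynomial.X ^ n)‖ ≤ 12 * 8 ^ k * (2 * M) ^ n := by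
  have h0 := norm_nodeResidue_le k (a := 0) (b := p) (c := q) (G := 1) hM
    (by simpa using zero_le_one.trans hM) (by simpa) (by simpa) n
  have h1 := norm_nodeResidue_le k (a := p) (b := 0) (c := q) (G := 1) hM hp (by simpa) hpq n
  have h2 := norm_nodeResidue_le k (a := q) (b := 0) (c := p) (G := 1) hM hq (by simpa)
    (by rwa [norm_sub_rev]) n
  rw [weightedNorm_one] at h0 h1 h2
  rw [residueSum, LinearMap.add_apply, LinearMap.add_apply]
  refine norm_add₃_le.trans ?_
  linarith

lemma norm_weighted_residueSum_le (hM : 1 ≤ M) (hp : ‖p‖ ≤ M) (hq : ‖q‖ ≤ M) (hp1 : 1 ≤ ‖p‖)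
    (hq1 : 1 ≤ ‖q‖) (hpq : 1 ≤ ‖p - q‖) (hT : 4 * M ≤ ‖T‖) (k : ℕ) {i : ℕ} (hi : i < 3) :
    ‖nodeResidue 0 p q k (halfPower k (T + 0)) (Polynomial.X ^ i) +
      (1 + p / T) ^ (1 / 2 : ℂ) *
        nodeResidue p 0 q k (halfPower k (T + p)) (Polynomial.X ^ i) +
      (1 + q / T) ^ (1 / 2 : ℂ) *
        nodeResidue q 0 p k (halfPower k (T + q)) (Polynomial.X ^ i)‖ ≤
      96 * M ^ 2 * (128 * M ^ 3 / ‖T‖ ^ 2) ^ k := by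
  have hT0 : T ≠ 0 := norm_pos_iff.1 (by linarith)
  have hTpos : 0 < ‖T‖ := by linarith
  have hlt : ∀ a : ℂ, ‖a‖ ≤ M → ‖a / T‖ < 1 := fun a ha => by
    rw [norm_div, div_lt_one hTpos]; linarith
  have s0 := hasSum_nodeResidue_halfPower k i p q hT0 (hlt 0 (by simpa using by linarith))
  have s1 := hasSum_nodeResidue_halfPower k i 0 q hT0 (hlt p hp)
  have s2 := hasSum_nodeResidue_halfPower k i 0 p hT0 (hlt q hq)
  rw [zero_div, add_zero, Complex.one_cpow, one_mul] at s0
  have s := (s0.add s1).add s2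
  simp only [← mul_add] at s
  have hpz : p ≠ 0 := norm_pos_iff.1 (by linarith)
  have hqz : q ≠ 0 := norm_pos_iff.1 (by linarith)
  have hpqz : p ≠ q := sub_ne_zero.1 (norm_pos_iff.1 (by linarith))
  have key := norm_le_of_hasSum_geometric (C := 48 * M ^ 2 * (16 * ‖T‖) ^ k)
    (r := 2 * M / ‖T‖) (n := 3 * k) s ?_ (by positivity) ?_ ?_
  · refine key.trans (le_of_eq ?_)
    have e : (16 * ‖T‖) ^ k * (2 * M / ‖T‖) ^ (3 * k) = (128 * M ^ 3 / ‖T‖ ^ 2) ^ k := by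
      rw [pow_mul, ← mul_pow]
      congr 1
      field_simp
      ring
    rw [← e]; ring
  · intro m hm
    have := residueSum_X_pow hpz hqz hpqz k (m + i) (by lia)
    rw [residueSum, LinearMap.add_apply, LinearMap.add_apply] at this
    rw [this, mul_zero]
  · rw [div_le_iff₀ hTpos]; linarith
  · intro m
    have h := norm_residueSum_X_pow_le hM hp hq hp1 hq1 hpq k (m + i)
    rw [residueSum, LinearMap.add_apply, LinearMap.add_apply] at h
    rw [norm_mul, norm_mul, norm_mul, norm_pow, norm_pow, norm_inv]
    have hi2 : (2 * M) ^ i ≤ 4 * M ^ 2 := by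
      calc (2 * M) ^ i ≤ (2 * M) ^ 2 := pow_le_pow_right₀ (by linarith) (by lia)
        _ = _ := by ring
    calc _ ≤ ‖T‖ ^ k * 2 ^ k * (‖T‖⁻¹) ^ m * (12 * 8 ^ k * (2 * M) ^ (m + i)) := by
          gcongr; exact norm_choose_half_le k m
      _ = ‖T‖ ^ k * 2 ^ k * (‖T‖⁻¹) ^ m * (12 * 8 ^ k * ((2 * M) ^ m * (2 * M) ^ i)) := by
          rw [pow_add]
      _ ≤ ‖T‖ ^ k * 2 ^ k * (‖T‖⁻¹) ^ m * (12 * 8 ^ k * ((2 * M) ^ m * (4 * M ^ 2))) := by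
          gcongr
      _ = _ := by
          have h16 : (16 : ℝ) ^ k = 2 ^ k * 8 ^ k := by rw [← mul_pow]; norm_num
          rw [mul_pow 16, h16, div_eq_mul_inv, mul_pow _ (‖T‖⁻¹)]
          ring

lemma norm_nodeResidue_halfPower_le {a b c : ℂ} (hM : 1 ≤ M) (ha : ‖a‖ ≤ M) (hb : 1 ≤ ‖a - b‖)
    (hc : 1 ≤ ‖a - c‖) (hT : 4 * M ≤ ‖T‖) (k : ℕ) {i : ℕ} (hi : i < 3) :
    ‖nodeResidue a b c k (halfPower k (T + a)) (Polynomial.X ^ i)‖ ≤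
      32 * M ^ 2 * (32 * ‖T‖) ^ k := by
  have hu : T + a ≠ 0 := by
    intro h
    have : ‖T‖ = ‖a‖ := by rw [eq_neg_of_add_eq_zero_left h, norm_neg]
    linarith
  have hw := weightedNorm_halfPower k (R := 2 * ‖T‖) hu
    ((norm_add_le _ _).trans (by linarith)) (by linarith)
  refine (norm_nodeResidue_le k hM ha hb hc i).trans ?_
  have hi2 : (2 * M) ^ i ≤ 4 * M ^ 2 := by
    calc (2 * M) ^ i ≤ (2 * M) ^ 2 := pow_le_pow_right₀ (by linarith) (by lia)
      _ = _ := by ring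
  calc _ ≤ 4 * 8 ^ k * (4 * M ^ 2) * (2 * (2 * (2 * ‖T‖)) ^ k) := by
        gcongr; exact weightedNorm_nonneg k _
    _ = 32 * M ^ 2 * (8 ^ k * (2 * (2 * ‖T‖)) ^ k) := by ring
    _ = _ := by rw [← mul_pow]; ring

/-- Simultaneous rational approximations to the square roots of `1 + p / T` and `1 + q / T`
cannot be too good. -/
theorem one_le_of_simultaneous_approx (hO : ∀ u ∈ O, u ≠ 0 → 1 ≤ ‖u‖) (hTO : T ∈ O) (hpO : p ∈ O)
    (hqO : q ∈ O) (hp0 : p ≠ 0) (hq0 : q ≠ 0) (hpq0 : p ≠ q) (hp : ‖p‖ ≤ M) (hq : ‖q‖ ≤ M)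
    (hT : 4 * M ≤ ‖T‖) {x y z : ℂ} (hx : x ∈ O) (hy : y ∈ O) (hz : z ∈ O) (hz0 : z ≠ 0) (k : ℕ) :
    1 ≤ 64 * M ^ 5 * (512 * M ^ 6 * ‖T‖) ^ k *
        (‖x - z * (1 + p / T) ^ (1 / 2 : ℂ)‖ + ‖y - z * (1 + q / T) ^ (1 / 2 : ℂ)‖) +
      192 * M ^ 5 * (2048 * M ^ 9 / ‖T‖ ^ 2) ^ k * ‖z‖ := by
  have hp1 := hO p hpO hp0
  have hq1 := hO q hqO hq0
  have hpq1 := hO (p - q) (O.sub_mem hpO hqO) (sub_ne_zero.2 hpq0)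
  have hM : 1 ≤ M := hp1.trans hp
  have hTpos : 0 < ‖T‖ := by linarith
  have hu : ∀ a : ℂ, ‖a‖ ≤ M → T + a ≠ 0 := by
    intro a ha h
    have : ‖T‖ = ‖a‖ := by rw [eq_neg_of_add_eq_zero_left h, norm_neg]
    linarith
  set P₀ := fun i : ℕ => nodeResidue 0 p q k (halfPower k (T + 0)) (Polynomial.X ^ i) with hP₀
  set P₁ := fun i : ℕ => nodeResidue p 0 q k (halfPower k (T + p)) (Polynomial.X ^ i) with hP₁
  set P₂ := fun i : ℕ => nodeResidue q 0 p k (halfPower k (T + q)) (Polynomial.X ^ i) with hP₂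
  obtain ⟨i, hi, hne⟩ : ∃ i < 3, z * P₀ i + x * P₁ i + y * P₂ i ≠ 0 := by
    by_contra! h
    exact hz0 (eq_zero_of_nodeResidue_combination hp0 hq0 hpq0
      (isHalfPower_halfPower k (hu 0 (by simpa using by linarith)))
      (isHalfPower_halfPower k (hu p hp)) (isHalfPower_halfPower k (hu q hq)) h).1
  set D := p * q * (p - q) with hD
  have hDO : D ∈ O := O.mul_mem (O.mul_mem hpO hqO) (O.sub_mem hpO hqO)
  have hD0 : D ≠ 0 := mul_ne_zero (mul_ne_zero hp0 hq0) (sub_ne_zero.2 hpq0)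
  have m0 : 4 ^ k * D ^ (2 * k + 1) * P₀ i ∈ O :=
    nodeResidue_halfPower_mem O k hTO O.zero_mem hpO hqO hp0.symm hq0.symm
      ⟨p - q, O.sub_mem hpO hqO, by rw [hD]; ring⟩ i
  have m1 : 4 ^ k * D ^ (2 * k + 1) * P₁ i ∈ O :=
    nodeResidue_halfPower_mem O k hTO hpO O.zero_mem hqO hp0 hpq0
      ⟨q, hqO, by rw [hD]; ring⟩ i
  have m2 : 4 ^ k * D ^ (2 * k + 1) * P₂ i ∈ O :=
    nodeResidue_halfPower_mem O k hTO hqO O.zero_mem hpO hq0 hpq0.symm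
      ⟨-p, O.neg_mem hpO, by rw [hD]; ring⟩ i
  have h4 : (4 : ℂ) ^ k ≠ 0 := pow_ne_zero k (by norm_num)
  have hL : 1 ≤ ‖4 ^ k * D ^ (2 * k + 1) * (z * P₀ i + x * P₁ i + y * P₂ i)‖ := by
    refine hO _ ?_ (mul_ne_zero (mul_ne_zero h4 (pow_ne_zero _ hD0)) hne)
    rw [show 4 ^ k * D ^ (2 * k + 1) * (z * P₀ i + x * P₁ i + y * P₂ i) =
      z * (4 ^ k * D ^ (2 * k + 1) * P₀ i) + x * (4 ^ k * D ^ (2 * k + 1) * P₁ i) +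
        y * (4 ^ k * D ^ (2 * k + 1) * P₂ i) by ring]
    exact O.add_mem (O.add_mem (O.mul_mem hz m0) (O.mul_mem hx m1)) (O.mul_mem hy m2)
  set θ := (1 + p / T) ^ (1 / 2 : ℂ)
  set η := (1 + q / T) ^ (1 / 2 : ℂ)
  have hS : ‖P₀ i + θ * P₁ i + η * P₂ i‖ ≤ 96 * M ^ 2 * (128 * M ^ 3 / ‖T‖ ^ 2) ^ k :=
    norm_weighted_residueSum_le hM hp hq hp1 hq1 hpq1 hT k hi
  have b1 : ‖P₁ i‖ ≤ 32 * M ^ 2 * (32 * ‖T‖) ^ k :=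
    norm_nodeResidue_halfPower_le hM hp (by simpa) hpq1 hT k hi
  have b2 : ‖P₂ i‖ ≤ 32 * M ^ 2 * (32 * ‖T‖) ^ k :=
    norm_nodeResidue_halfPower_le hM hq (by simpa) (by rwa [norm_sub_rev]) hT k hi
  have hDle : ‖D‖ ≤ 2 * M ^ 3 := by
    rw [hD, norm_mul, norm_mul]
    calc _ ≤ M * M * (M + M) := by
          gcongr; exact (norm_sub_le _ _).trans (add_le_add hp hq)
      _ = _ := by ring
  have e : z * P₀ i + x * P₁ i + y * P₂ i =
      z * (P₀ i + θ * P₁ i + η * P₂ i) + (x - z * θ) * P₁ i + (y - z * η) * P₂ i := by ring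
  have hle : ‖z * P₀ i + x * P₁ i + y * P₂ i‖ ≤
      ‖z‖ * (96 * M ^ 2 * (128 * M ^ 3 / ‖T‖ ^ 2) ^ k) +
        (‖x - z * θ‖ + ‖y - z * η‖) * (32 * M ^ 2 * (32 * ‖T‖) ^ k) := by
    rw [e]
    refine norm_add₃_le.trans ?_
    rw [norm_mul, norm_mul, norm_mul, add_mul _ _ (32 * M ^ 2 * (32 * ‖T‖) ^ k), add_assoc]
    gcongr
  refine hL.trans ?_
  rw [norm_mul, norm_mul, norm_pow, norm_pow, Complex.norm_ofNat]
  calc _ ≤ 4 ^ k * (2 * M ^ 3) ^ (2 * k + 1) *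
        (‖z‖ * (96 * M ^ 2 * (128 * M ^ 3 / ‖T‖ ^ 2) ^ k) +
        (‖x - z * θ‖ + ‖y - z * η‖) * (32 * M ^ 2 * (32 * ‖T‖) ^ k)) := by gcongr
    _ = 64 * M ^ 5 * (4 ^ k * ((2 * M ^ 3) ^ 2) ^ k * (32 * ‖T‖) ^ k) *
          (‖x - z * θ‖ + ‖y - z * η‖) +
        192 * M ^ 5 * (4 ^ k * ((2 * M ^ 3) ^ 2) ^ k * (128 * M ^ 3 / ‖T‖ ^ 2) ^ k) * ‖z‖ := by
        rw [pow_succ (2 * M ^ 3) (2 * k), pow_mul]; ring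
    _ = _ := by
        rw [← mul_pow, ← mul_pow, ← mul_pow]
        ring_nf

end Approximation

section UpperGap

lemma le_pow_five_of_forall {g τ ζ : ℝ} (hg : 2 ≤ g) (hτ : g ^ 9 ≤ τ)
    (h : ∀ k : ℕ, ζ ≤ g * (g * τ) ^ k * τ + g / 8 * (g / τ ^ 2) ^ k * ζ ^ 2) : ζ ≤ τ ^ 5 := by
  by_contra! hζ
  have hg1 : 1 ≤ g := by linarith
  have hgτ : g ≤ τ := (le_self_pow₀ hg1 (by norm_num)).trans hτ
  have hτ0 : 0 < τ := by linarith
  have hζ0 : 0 < ζ := (by positivity : 0 < τ ^ 5).trans hζ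
  have key : ∀ n : ℕ, 2 * g * (g * τ) ^ (n + 3) * τ < ζ := by
    intro n
    induction n with
    | zero =>
      refine lt_of_le_of_lt ?_ hζ
      have : 2 * g ^ 4 ≤ τ := by
        calc 2 * g ^ 4 ≤ g * g ^ 4 := by gcongr
          _ = g ^ 5 := by ring
          _ ≤ g ^ 9 := pow_le_pow_right₀ hg1 (by norm_num)
          _ ≤ τ := hτ
      calc _ = 2 * g ^ 4 * τ ^ 4 := by ring
        _ ≤ τ * τ ^ 4 := by gcongr
        _ = τ ^ 5 := by ring
    | succ n ih =>
      have h1 := h (n + 3)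
      have h2 : 4 * ζ < g * (g / τ ^ 2) ^ (n + 3) * ζ * ζ := by nlinarith
      have h3 := lt_of_mul_lt_mul_right h2 hζ0.le
      rw [div_pow, ← pow_mul, mul_div_assoc', div_mul_eq_mul_div, lt_div_iff₀ (by positivity)] at h3
      have h4 : g ^ (2 * n + 9) * τ ^ 2 ≤ τ ^ (n + 3) := by
        have e1 : (g ^ 2) ^ n ≤ τ ^ n := pow_le_pow_left₀ (by positivity)
          ((pow_le_pow_right₀ hg1 (by norm_num)).trans hτ) n
        calc _ = (g ^ 2) ^ n * g ^ 9 * τ ^ 2 := by ring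
          _ ≤ τ ^ n * τ * τ ^ 2 := by gcongr
          _ = _ := by ring
      have h5 : 2 * g * (g * τ) ^ (n + 1 + 3) * τ * g ^ (n + 4) ≤ 4 * τ ^ (2 * (n + 3)) := by
        calc _ = 2 * (g ^ (2 * n + 9) * τ ^ 2) * τ ^ (n + 3) := by ring
          _ ≤ 2 * τ ^ (n + 3) * τ ^ (n + 3) := by gcongr
          _ ≤ 4 * (τ ^ (n + 3) * τ ^ (n + 3)) := by
            nlinarith [pow_pos hτ0 (n + 3)]
          _ = _ := by ring
      refine lt_of_mul_lt_mul_right (a := g ^ (n + 4)) ?_ (by positivity)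
      calc _ ≤ _ := h5
        _ < _ := h3
        _ = _ := by ring
  obtain ⟨n, hn⟩ := pow_unbounded_of_one_lt ζ (by linarith : 1 < g)
  have := key n
  have h6 : g ^ n ≤ 2 * g * (g * τ) ^ (n + 3) * τ := by
    calc g ^ n ≤ (g * τ) ^ (n + 3) := by
          refine (pow_le_pow_left₀ (by linarith) (le_mul_of_one_le_right (by linarith)
            (by linarith)) n).trans (pow_le_pow_right₀ (by nlinarith) (by lia))
      _ = 1 * (g * τ) ^ (n + 3) * 1 := by ring
      _ ≤ _ := by gcongr <;> linarith
  linarith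

/-- Two numbers with close squares are close up to sign. -/
lemma exists_sign_norm_sub_le (X W : ℂ) :
    ∃ ε : ℂ, (ε = 1 ∨ ε = -1) ∧ ‖ε * X - W‖ * ‖W‖ ≤ ‖X ^ 2 - W ^ 2‖ := by
  have e : X ^ 2 - W ^ 2 = (X - W) * (X + W) := by ring
  have h2 : 2 * ‖W‖ ≤ ‖X - W‖ + ‖X + W‖ := by
    calc 2 * ‖W‖ = ‖(X + W) - (X - W)‖ := by
          rw [show (X + W) - (X - W) = 2 * W by ring, norm_mul, Complex.norm_ofNat]
      _ ≤ _ := by linarith [norm_sub_le (X + W) (X - W)]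
  rw [e, norm_mul]
  rcases le_total ‖X - W‖ ‖X + W‖ with h | h
  · refine ⟨1, Or.inl rfl, ?_⟩
    rw [one_mul]
    exact mul_le_mul_of_nonneg_left (by linarith) (norm_nonneg _)
  · refine ⟨-1, Or.inr rfl, ?_⟩
    rw [show -1 * X - W = -(X + W) by ring, norm_neg, mul_comm]
    exact mul_le_mul_of_nonneg_right (by linarith) (norm_nonneg _)

variable {O : Subring ℂ}

/-- One of the two approximations attached to an extension `{a, c, d}` of the pair `{a, c}`. -/
lemma exists_approx_of_triple {a b c d s x z : ℂ} (hs : s ^ 2 = a * c + 1)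
    (hx : x ^ 2 = a * d + 1) (hz : z ^ 2 = c * d + 1) (ha : 1 ≤ ‖a‖) (hb : 1 ≤ ‖b‖)
    (hac : ‖a‖ ≤ ‖c‖) (hc : 2 ≤ ‖c‖) :
    ∃ ε : ℂ, (ε = 1 ∨ ε = -1) ∧ ‖ε * (b * s * x) -
      a * b * z * (1 + b / (a * b * c)) ^ (1 / 2 : ℂ)‖ * ‖z‖ ≤ 4 * ‖b‖ * ‖c‖ := by
  have ha0 : a ≠ 0 := norm_pos_iff.1 (by linarith)
  have hb0 : b ≠ 0 := norm_pos_iff.1 (by linarith)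
  have hc0 : c ≠ 0 := norm_pos_iff.1 (by linarith)
  set θ := (1 + b / (a * b * c)) ^ (1 / 2 : ℂ) with hθ
  have hθ2 : θ ^ 2 = 1 + (a * c)⁻¹ := by
    rw [hθ, ← Complex.cpow_mul_nat]
    norm_num
    field_simp
  have hac1 : ‖(a * c)⁻¹‖ ≤ 1 / 2 := by
    rw [norm_inv, norm_mul, one_div]
    exact inv_anti₀ (by norm_num) (by nlinarith)
  have hθn : ‖θ‖ ≤ 2 := by
    have : ‖θ‖ ^ 2 ≤ 1 + 1 / 2 := by
      rw [← norm_pow, hθ2]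
      exact (norm_add_le _ _).trans (by rw [norm_one]; gcongr)
    nlinarith [norm_nonneg θ]
  have hθ0 : 0 < ‖θ‖ := by
    rw [norm_pos_iff]
    rintro h
    rw [h, zero_pow two_ne_zero] at hθ2
    have : (a * c)⁻¹ = -1 := by linear_combination -hθ2
    rw [this] at hac1; norm_num at hac1
  obtain ⟨ε, hε, h⟩ := exists_sign_norm_sub_le (b * s * x) (a * b * z * θ)
  refine ⟨ε, hε, ?_⟩
  have e : (b * s * x) ^ 2 - (a * b * z * θ) ^ 2 = a * b ^ 2 * (c - a) * θ ^ 2 := by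
    rw [mul_pow, mul_pow, hs, hx, mul_pow _ θ, mul_pow _ z, hz, hθ2]
    field_simp
    ring
  rw [e, norm_mul _ θ, norm_mul _ z, norm_mul a b, norm_mul _ (θ ^ 2), norm_mul _ (c - a),
    norm_mul a, norm_pow, norm_pow] at h
  have hca : ‖c - a‖ ≤ 2 * ‖c‖ := (norm_sub_le _ _).trans (by linarith)
  have hpos : 0 < ‖a‖ * ‖b‖ * ‖θ‖ := by positivity
  refine le_of_mul_le_mul_right ?_ hpos
  calc _ = ‖ε * (b * s * x) - a * b * z * θ‖ * (‖a‖ * ‖b‖ * ‖z‖ * ‖θ‖) := by ring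
    _ ≤ _ := h
    _ = ‖a‖ * ‖b‖ * ‖θ‖ * (‖b‖ * ‖c - a‖ * ‖θ‖) := by ring
    _ ≤ ‖a‖ * ‖b‖ * ‖θ‖ * (‖b‖ * (2 * ‖c‖) * 2) := by gcongr
    _ = _ := by ring

/-- The gap principle: if `c` is large compared with `a` and `b`, the fourth element of a
quadruple is polynomially bounded. -/
theorem norm_le_pow_of_quadruple (hO : ∀ u ∈ O, u ≠ 0 → 1 ≤ ‖u‖) {a b c d s t x y z : ℂ}
    (ha : a ∈ O) (hb : b ∈ O) (hc : c ∈ O) (hsO : s ∈ O) (htO : t ∈ O) (hxO : x ∈ O)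
    (hyO : y ∈ O) (hzO : z ∈ O) (ha0 : a ≠ 0) (hb0 : b ≠ 0) (hab : a ≠ b)
    (hab' : ‖a‖ ≤ ‖b‖) (hbc : ‖b‖ ≤ ‖c‖) (hs : s ^ 2 = a * c + 1) (ht : t ^ 2 = b * c + 1)
    (hx : x ^ 2 = a * d + 1) (hy : y ^ 2 = b * d + 1) (hz : z ^ 2 = c * d + 1)
    (hbig : (2048 * ‖b‖ ^ 9) ^ 9 ≤ ‖a * b * c‖) : ‖z‖ ≤ ‖a * b * c‖ ^ 5 := by
  have ha1 := hO a ha ha0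
  have hb1 := hO b hb hb0
  have hb9 : 1 ≤ ‖b‖ ^ 9 := one_le_pow₀ hb1
  by_cases hz0 : z = 0
  · rw [hz0, norm_zero]; positivity
  have hzpos : 0 < ‖z‖ := norm_pos_iff.2 hz0
  have hg : 2048 * ‖b‖ ^ 9 ≤ ‖a * b * c‖ :=
    (le_self_pow₀ (by linarith) (by norm_num)).trans hbig
  have hT4 : 4 * ‖b‖ ≤ ‖a * b * c‖ := by
    refine le_trans ?_ hg
    have : ‖b‖ ≤ ‖b‖ ^ 9 := le_self_pow₀ hb1 (by norm_num)
    linarith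
  have hc2 : 2 ≤ ‖c‖ := by
    by_contra! h
    have h1 : ‖a * b * c‖ ≤ 8 := by
      rw [norm_mul, norm_mul]
      calc _ ≤ (2 : ℝ) * 2 * 2 := by gcongr <;> linarith
        _ = 8 := by norm_num
    linarith
  obtain ⟨ε, hε, h1⟩ := exists_approx_of_triple hs hx hz ha1 hb1 (hab'.trans hbc) hc2
  obtain ⟨δ, hδ, h2⟩ := exists_approx_of_triple ht hy hz hb1 ha1 hbc hc2
  have hsign : ∀ ε : ℂ, ε = 1 ∨ ε = -1 → ε ∈ O := by
    rintro ε (rfl | rfl)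
    exacts [O.one_mem, O.neg_mem O.one_mem]
  rw [mul_comm b a] at h2
  refine le_pow_five_of_forall (by linarith : 2 ≤ 2048 * ‖b‖ ^ 9) hbig fun k => ?_
  have hq := one_le_of_simultaneous_approx hO (O.mul_mem (O.mul_mem ha hb) hc) hb ha hb0 ha0
    hab.symm le_rfl hab' hT4 (O.mul_mem (hsign ε hε) (O.mul_mem (O.mul_mem hb hsO) hxO))
    (O.mul_mem (hsign δ hδ) (O.mul_mem (O.mul_mem ha htO) hyO))
    (O.mul_mem (O.mul_mem ha hb) hzO) (mul_ne_zero (mul_ne_zero ha0 hb0) hz0) k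
  set τ := ‖a * b * c‖ with hτ
  set A := ‖ε * (b * s * x) - a * b * z * (1 + b / (a * b * c)) ^ (1 / 2 : ℂ)‖
  set B := ‖δ * (a * t * y) - a * b * z * (1 + a / (a * b * c)) ^ (1 / 2 : ℂ)‖
  have hτ0 : 0 ≤ τ := norm_nonneg _
  have hAB : (A + B) * ‖z‖ ≤ 8 * τ := by
    have e1 : ‖b‖ * ‖c‖ ≤ τ := by
      rw [hτ, norm_mul, norm_mul, mul_assoc]
      exact le_mul_of_one_le_left (by positivity) ha1
    have e2 : ‖a‖ * ‖c‖ ≤ ‖b‖ * ‖c‖ := by gcongr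
    linarith
  have hab2 : ‖a * b * z‖ ≤ ‖b‖ ^ 2 * ‖z‖ := by
    rw [norm_mul, norm_mul, pow_two]; gcongr
  have p5 : ‖b‖ ^ 5 ≤ ‖b‖ ^ 9 := pow_le_pow_right₀ hb1 (by norm_num)
  have p6 : ‖b‖ ^ 6 ≤ ‖b‖ ^ 9 := pow_le_pow_right₀ hb1 (by norm_num)
  have p7 : ‖b‖ ^ 7 ≤ ‖b‖ ^ 9 := pow_le_pow_right₀ hb1 (by norm_num)
  calc ‖z‖ = 1 * ‖z‖ := (one_mul _).symm
    _ ≤ _ := mul_le_mul_of_nonneg_right hq hzpos.le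
    _ = 64 * ‖b‖ ^ 5 * (512 * ‖b‖ ^ 6 * τ) ^ k * ((A + B) * ‖z‖) +
        192 * ‖b‖ ^ 5 * (2048 * ‖b‖ ^ 9 / τ ^ 2) ^ k * ‖a * b * z‖ * ‖z‖ := by ring
    _ ≤ 64 * ‖b‖ ^ 5 * (512 * ‖b‖ ^ 6 * τ) ^ k * (8 * τ) +
        192 * ‖b‖ ^ 5 * (2048 * ‖b‖ ^ 9 / τ ^ 2) ^ k * (‖b‖ ^ 2 * ‖z‖) * ‖z‖ := by gcongr
    _ = 512 * ‖b‖ ^ 5 * (512 * ‖b‖ ^ 6 * τ) ^ k * τ +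
        192 * ‖b‖ ^ 7 * (2048 * ‖b‖ ^ 9 / τ ^ 2) ^ k * ‖z‖ ^ 2 := by ring
    _ ≤ _ := by
        gcongr <;> linarith

end UpperGap

section LowerGap

variable {O : Subring ℂ}

/-- For a triple, either the largest element is of size at least about `|a b|`, or the triple
is of the form `{a, b, a + b + 2 r}`. -/
lemma triple_gap (hO : ∀ u ∈ O, u ≠ 0 → 1 ≤ ‖u‖) {a b c r s t : ℂ} (ha : a ∈ O) (hb : b ∈ O)
    (hc : c ∈ O) (hrO : r ∈ O) (hsO : s ∈ O) (htO : t ∈ O) (hr : r ^ 2 = a * b + 1)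
    (hs : s ^ 2 = a * c + 1) (ht : t ^ 2 = b * c + 1) (hc1 : 1 ≤ ‖c‖) (hac : ‖a‖ ≤ ‖c‖)
    (hbc : ‖b‖ ≤ ‖c‖) :
    (∃ r' ∈ O, r' ^ 2 = a * b + 1 ∧ c = a + b + 2 * r') ∨
      4 * (‖a‖ * ‖b‖) ≤ 9 * ‖c‖ + 11 := by
  set m := a + b + c + 2 * (a * b * c) with hm
  have h2 : (2 : ℂ) ∈ O := by exact_mod_cast natCast_mem O 2
  have hmO : m ∈ O := O.add_mem (O.add_mem (O.add_mem ha hb) hc)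
    (O.mul_mem h2 (O.mul_mem (O.mul_mem ha hb) hc))
  have hpO : 2 * (r * s * t) ∈ O := O.mul_mem h2 (O.mul_mem (O.mul_mem hrO hsO) htO)
  have hprod : (m + 2 * (r * s * t)) * (m - 2 * (r * s * t)) = (c - a - b) ^ 2 - 4 * r ^ 2 := by
    have : (m + 2 * (r * s * t)) * (m - 2 * (r * s * t)) = m ^ 2 - 4 * (r ^ 2 * s ^ 2 * t ^ 2) := by
      ring
    rw [this, hr, hs, ht, hm]; ring
  by_cases h0 : (m + 2 * (r * s * t)) * (m - 2 * (r * s * t)) = 0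
  · left
    rw [hprod, show (c - a - b) ^ 2 - 4 * r ^ 2 = (c - a - b - 2 * r) * (c - a - b + 2 * r) by ring,
      mul_eq_zero] at h0
    rcases h0 with h | h
    · exact ⟨r, hrO, hr, by linear_combination h⟩
    · exact ⟨-r, O.neg_mem hrO, by rw [neg_sq, hr], by linear_combination h⟩
  · right
    obtain ⟨h1, h2⟩ := mul_ne_zero_iff.1 h0
    have l1 := hO _ (O.add_mem hmO hpO) h1
    have l2 := hO _ (O.sub_mem hmO hpO) h2
    have lprod : ‖m + 2 * (r * s * t)‖ * ‖m - 2 * (r * s * t)‖ ≤ 9 * ‖c‖ ^ 2 + 4 := by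
      rw [← norm_mul, hprod, hr,
        show (c - a - b) ^ 2 - 4 * (a * b + 1) = c * c + (a * a + (b * b + (-2 * (a * b) +
          (-2 * (a * c) + (-2 * (b * c) + -4))))) by ring]
      have n2 : ‖(-2 : ℂ)‖ = 2 := by norm_num
      have n4 : ‖(-4 : ℂ)‖ = 4 := by norm_num
      calc _ ≤ ‖c‖ * ‖c‖ + (‖a‖ * ‖a‖ + (‖b‖ * ‖b‖ + (2 * (‖a‖ * ‖b‖) + (2 * (‖a‖ * ‖c‖) +
            (2 * (‖b‖ * ‖c‖) + 4))))) := by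
            repeat refine (norm_add_le _ _).trans (add_le_add (by simp) ?_)
            rw [n4]
        _ ≤ ‖c‖ * ‖c‖ + (‖c‖ * ‖c‖ + (‖c‖ * ‖c‖ + (2 * (‖c‖ * ‖c‖) + (2 * (‖c‖ * ‖c‖) +
            (2 * (‖c‖ * ‖c‖) + 4))))) := by gcongr
        _ = _ := by ring
    have lsum : 4 * (‖a‖ * ‖b‖ * ‖c‖) - 6 * ‖c‖ ≤
        ‖m + 2 * (r * s * t)‖ + ‖m - 2 * (r * s * t)‖ := by
      have e : 4 * (a * b * c) = (m + 2 * (r * s * t)) + ((m - 2 * (r * s * t)) +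
          (-2 * a + (-2 * b + -2 * c))) := by rw [hm]; ring
      have n2 : ‖(-2 : ℂ)‖ = 2 := by norm_num
      have : ‖4 * (a * b * c)‖ ≤ ‖m + 2 * (r * s * t)‖ + (‖m - 2 * (r * s * t)‖ +
          (2 * ‖a‖ + (2 * ‖b‖ + 2 * ‖c‖))) := by
        rw [e]
        repeat refine (norm_add_le _ _).trans (add_le_add (by simp) ?_)
        simp
      rw [norm_mul, norm_mul, norm_mul, Complex.norm_ofNat] at this
      linarith
    refine le_of_mul_le_mul_right (a := ‖c‖) ?_ (by linarith)
    nlinarith [mul_nonneg (sub_nonneg.2 l1) (sub_nonneg.2 l2)]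

/-- `uv + 1` is a square in `O`. -/
def SquarePair (O : Subring ℂ) (u v : ℂ) : Prop := ∃ w ∈ O, w ^ 2 = u * v + 1

variable {a b c d : ℂ}

lemma quadruple_gap (hO : ∀ u ∈ O, u ≠ 0 → 1 ≤ ‖u‖) (ha : a ∈ O) (hb : b ∈ O) (hc : c ∈ O)
    (hd : d ∈ O) (hab : SquarePair O a b) (hac : SquarePair O a c) (had : SquarePair O a d)
    (hbc : SquarePair O b c) (hbd : SquarePair O b d) (hcd : SquarePair O c d) (hne : a ≠ b)
    (h3 : 3 ≤ ‖a‖) (hab' : ‖a‖ ≤ ‖b‖) (hbc' : ‖b‖ ≤ ‖c‖) (hcd' : ‖c‖ ≤ ‖d‖) :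
    4 * (‖a‖ * ‖c‖) ≤ 9 * ‖d‖ + 11 := by
  obtain ⟨r, hrO, hr⟩ := hab
  obtain ⟨s, hsO, hs⟩ := hac
  obtain ⟨x, hxO, hx⟩ := had
  obtain ⟨t, htO, ht⟩ := hbc
  obtain ⟨y, hyO, hy⟩ := hbd
  obtain ⟨z, hzO, hz⟩ := hcd
  have hd1 : 1 ≤ ‖d‖ := by linarith
  rcases triple_gap hO ha hc hd hsO hxO hzO hs hx hz hd1 (by linarith) hcd' with
    ⟨s', hs'O, hs', e1⟩ | h
  swap
  · exact h
  rcases triple_gap hO hb hc hd htO hyO hzO ht hy hz hd1 (by linarith) hcd' with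
    ⟨t', -, ht', e2⟩ | h
  swap
  · refine le_trans ?_ h
    gcongr
  exfalso
  have hst : s' - t' ≠ 0 := by
    intro h
    exact hne (by linear_combination e2 - e1 - 2 * h)
  have hsum : s' + t' = -2 * c := by
    apply mul_left_cancel₀ hst
    linear_combination hs' - ht' + c * (e2 - e1)
  have hprod : (a + 2 * s' - r) * (a + 2 * s' + r) = 3 := by
    have hb : b = a + 4 * c + 4 * s' := by linear_combination e1 - e2 - 2 * hsum
    rw [hb] at hr
    linear_combination 4 * hs' - hr
  have h2 : (2 : ℂ) ∈ O := by exact_mod_cast natCast_mem O 2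
  have huO : a + 2 * s' ∈ O := O.add_mem ha (O.mul_mem h2 hs'O)
  have hp0 : (a + 2 * s' - r) * (a + 2 * s' + r) ≠ 0 := by rw [hprod]; norm_num
  have l1 := hO _ (O.sub_mem huO hrO) (left_ne_zero_of_mul hp0)
  have l2 := hO _ (O.add_mem huO hrO) (right_ne_zero_of_mul hp0)
  have hn : ‖a + 2 * s' - r‖ * ‖a + 2 * s' + r‖ = 3 := by
    rw [← norm_mul, hprod]; norm_num
  have hu : ‖2 * s'‖ ≤ ‖a‖ + 2 := by
    have e : 4 * s' = (a + 2 * s' - r) + ((a + 2 * s' + r) + -2 * a) := by ring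
    have h1 : ‖4 * s'‖ ≤ ‖a + 2 * s' - r‖ + (‖a + 2 * s' + r‖ + 2 * ‖a‖) := by
      rw [e]
      refine (norm_add_le _ _).trans (add_le_add le_rfl ((norm_add_le _ _).trans ?_))
      simp
    rw [norm_mul, Complex.norm_ofNat] at h1 ⊢
    nlinarith [mul_nonneg (sub_nonneg.2 l1) (sub_nonneg.2 l2)]
  have hl : 4 * (‖a‖ * ‖c‖) - 4 ≤ ‖2 * s'‖ ^ 2 := by
    rw [← norm_pow, mul_pow, hs', norm_mul, show ‖(2 : ℂ) ^ 2‖ = 4 by norm_num, ← norm_mul]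
    have := norm_sub_le (a * c + 1) 1
    rw [add_sub_cancel_right, norm_one] at this
    linarith
  nlinarith [norm_nonneg (2 * s')]

lemma fibonacci_gap (hO : ∀ u ∈ O, u ≠ 0 → 1 ≤ ‖u‖) (ha : a ∈ O) (hb : b ∈ O) (hc : c ∈ O)
    (hd : d ∈ O) (hab : SquarePair O a b) (hac : SquarePair O a c) (had : SquarePair O a d)
    (hbc : SquarePair O b c) (hbd : SquarePair O b d) (hcd : SquarePair O c d) (hne : a ≠ b)
    (h10 : 10 ≤ ‖a‖) (hab' : ‖a‖ ≤ ‖b‖) (hbc' : ‖b‖ ≤ ‖c‖) (hcd' : ‖c‖ ≤ ‖d‖) :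
    4 * (‖b‖ * ‖c‖) ≤ 9 * ‖d‖ + 11 := by
  have hq := quadruple_gap hO ha hb hc hd hab hac had hbc hbd hcd hne (by linarith) hab' hbc' hcd'
  obtain ⟨t, htO, ht⟩ := hbc
  obtain ⟨y, hyO, hy⟩ := hbd
  obtain ⟨z, hzO, hz⟩ := hcd
  rcases triple_gap hO hb hc hd htO hyO hzO ht hy hz (by linarith) (by linarith) hcd' with
    ⟨t', -, ht', e⟩ | h
  swap
  · exact h
  exfalso
  have h1 : ‖t'‖ ^ 2 ≤ ‖b‖ * ‖c‖ + 1 := by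
    rw [← norm_pow, ht', ← norm_mul]
    exact (norm_add_le _ _).trans (by rw [norm_one])
  have h2 : ‖t'‖ ≤ ‖c‖ + 1 := by nlinarith [norm_nonneg t']
  have h3 : ‖d‖ ≤ ‖b‖ + ‖c‖ + 2 * ‖t'‖ := by
    rw [e]
    exact norm_add₃_le.trans (by simp)
  nlinarith

end LowerGap

section Growth

lemma fib_growth {y : ℕ → ℝ} {N i : ℕ} (hpos : ∀ n, 0 ≤ y n)
    (h : ∀ n, i ≤ n → n + 2 < N → y (n + 1) * y n ≤ y (n + 2)) (n : ℕ) (hn : i + n + 1 < N) :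
    y i ^ Nat.fib n * y (i + 1) ^ Nat.fib (n + 1) ≤ y (i + n + 1) := by
  induction n using Nat.twoStepInduction with
  | zero => simp
  | one => simpa [mul_comm] using h i le_rfl hn
  | more n ih1 ih2 =>
    refine le_trans ?_ (h (i + n + 1) (by lia) hn)
    refine le_trans (le_of_eq ?_) (mul_le_mul (ih2 (by lia)) (ih1 (by lia))
      (mul_nonneg (pow_nonneg (hpos _) _) (pow_nonneg (hpos _) _)) (hpos _))
    rw [Nat.fib_add_two, Nat.fib_add_two (n := n + 1), pow_add, pow_add, Nat.fib_add_two]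
    ring

/-- Numerical growth of the absolute values of a large Diophantine tuple. -/
lemma growth_contradiction {x : ℕ → ℝ} (h4 : ∀ n, 4 ≤ x n)
    (hq : ∀ n, n + 3 < 24 → 4 * (x n * x (n + 2)) ≤ 9 * x (n + 3) + 11)
    (hf : ∀ n, n + 3 < 24 → 10 ≤ x n → 4 * (x (n + 1) * x (n + 2)) ≤ 9 * x (n + 3) + 11)
    (hmono : ∀ n, n + 1 < 24 → x n ≤ x (n + 1))
    (hup : (2048 * x 7 ^ 9) ^ 9 ≤ x 6 * x 7 * x 17 →
      x 17 * x 23 ≤ (x 6 * x 7 * x 17) ^ 10 + 1) : False := by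
  have x3 : 53 / 9 ≤ x 3 := by nlinarith [hq 0 (by norm_num), h4 0, h4 2]
  have x4 : 9 ≤ x 4 := by nlinarith [hq 1 (by norm_num), h4 1]
  have x5 : 14 ≤ x 5 := by nlinarith [hq 2 (by norm_num), h4 2]
  have x6 : 35 ≤ x 6 := by nlinarith [hq 3 (by norm_num)]
  have x7 : 35 ≤ x 7 := x6.trans (hmono 6 (by norm_num))
  have hten : ∀ n, 5 ≤ n → n < 24 → 10 ≤ x n := by
    intro n hn
    induction n, hn using Nat.le_induction with
    | base => intro _; linarith
    | succ n hn ih => intro h; exact (ih (by lia)).trans (hmono n h)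
  obtain ⟨y, hy⟩ : ∃ y : ℕ → ℝ, ∀ n, x n = 3 * y n := ⟨fun n => x n / 3, fun n => by ring⟩
  have hpos : ∀ n, 0 ≤ y n := fun n => by linarith [h4 n, hy n]
  have hrec : ∀ n, 6 ≤ n → n + 2 < 24 → y (n + 1) * y n ≤ y (n + 2) := by
    intro n hn hlt
    obtain ⟨m, rfl⟩ : ∃ m, n = m + 1 := ⟨n - 1, by lia⟩
    have h := hf m (by lia) (hten m (by lia) (by lia))
    have h1 := hten (m + 1) (by lia) (by lia)
    have h2 := hten (m + 2) (by lia) (by lia)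
    rw [hy (m + 1), hy (m + 2), hy (m + 3)] at h
    rw [hy] at h1 h2
    show y (m + 2) * y (m + 1) ≤ y (m + 3)
    nlinarith
  have y17 := fib_growth (i := 6) hpos hrec 10 (by norm_num)
  have y23 := fib_growth (i := 16) hpos (fun n hn => hrec n (by lia)) 6 (by norm_num)
  have f6 : Nat.fib 6 = 8 := rfl
  have f7 : Nat.fib 7 = 13 := rfl
  have f10 : Nat.fib 10 = 55 := rfl
  have f11 : Nat.fib 11 = 89 := rfl
  simp only [Nat.reduceAdd, f6, f7, f10, f11] at y17 y23
  have y16 : 1 ≤ y 16 := by linarith [hten 16 (by norm_num) (by norm_num), hy 16]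
  rw [hy] at x6 x7
  have hy6 : 35 / 3 ≤ y 6 := by linarith
  have hy7 : 35 / 3 ≤ y 7 := by linarith
  rw [hy 6, hy 7, hy 17, hy 23] at hup
  generalize y 6 = u at *
  generalize y 7 = v at *
  generalize y 17 = w at *
  generalize y 23 = d at *
  have hu1 : 1 ≤ u := by linarith
  have hv1 : 1 ≤ v := by linarith
  have hw0 : (u * v) ^ 21 ≤ w := by
    refine le_trans ?_ y17
    rw [mul_pow]
    gcongr <;> first | assumption | norm_num
  have huv : 81 ≤ u * v := by nlinarith
  have hw1 : 81 ≤ w := by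
    refine le_trans huv ((le_self_pow₀ (by linarith) (by norm_num)).trans hw0)
  have hd : w ^ 13 ≤ d := by
    refine le_trans ?_ y23
    exact le_mul_of_one_le_left (by positivity) (one_le_pow₀ y16)
  have h1 : 3 * w * (3 * d) ≤ (3 * u * (3 * v) * (3 * w)) ^ 10 + 1 := by
    apply hup
    have hc : (2 : ℝ) ^ 99 * 3 ^ 78 ≤ (35 / 3) ^ 56 * (35 / 3) ^ 9 := by norm_num
    calc (2048 * (3 * v) ^ 9) ^ 9 = 27 * (2 ^ 99 * 3 ^ 78) * v ^ 81 := by ring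
      _ ≤ 27 * ((35 / 3) ^ 56 * (35 / 3) ^ 9) * v ^ 81 := by gcongr
      _ ≤ 27 * (u ^ 56 * v ^ 9) * v ^ 81 := by gcongr
      _ = 27 * u * v * (u ^ 55 * v ^ 89) := by ring
      _ ≤ 27 * u * v * w := by gcongr
      _ = _ := by ring
  have h2 : (3 * u * (3 * v) * (3 * w)) ^ 10 ≤ w * w ^ 10 := by
    calc _ = 27 ^ 10 * (u * v) ^ 10 * w ^ 10 := by ring
      _ ≤ (u * v) ^ 10 * (u * v) ^ 10 * w ^ 10 := by gcongr; linarith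
      _ = (u * v) ^ 20 * w ^ 10 := by ring
      _ ≤ w * w ^ 10 := by
        gcongr
        exact (pow_le_pow_right₀ (by linarith) (by norm_num)).trans hw0
  have h3 : w * w ^ 10 ≤ w ^ 14 := by
    rw [← pow_succ']; exact pow_le_pow_right₀ (by linarith) (by norm_num)
  have h4 : 1 ≤ w ^ 14 := one_le_pow₀ (by linarith)
  nlinarith

end Growth

section SmallElements

/-- The pair `(t, y)`, standing for `(t + y √-m) / 2`, is a nonzero integer of absolute value
less than `4`. -/
def IsSmallPair (m t y : ℤ) : Prop :=
  t * t + m * (y * y) < 64 ∧ (t * t + m * (y * y)) % 4 = 0 ∧ 0 < t * t + m * (y * y)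

instance (m t y : ℤ) : Decidable (IsSmallPair m t y) := by unfold IsSmallPair; infer_instance

/-- The modulus by which the first coordinate of small pairs is coloured. -/
def colourModulus (m : ℤ) : ℤ := if m ∈ [1, 2, 4, 8, 32] then 5 else 3

/-- `(P + Q √-m) / 4` is, up to conjugation, the square of `(a + b √-m) / 2` with
`a` and `b` small. -/
def IsSmallSquare (m P Q : ℤ) : Prop :=
  ∃ b : ℕ, b < 9 ∧ m * ((b * b : ℕ) : ℤ) < 68 ∧ ∃ a : ℕ, a < 9 ∧
    P = ((a * a : ℕ) : ℤ) - m * ((b * b : ℕ) : ℤ) ∧ Q.natAbs = 2 * (a * b) ∧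
    (((a * a : ℕ) : ℤ) + m * ((b * b : ℕ) : ℤ)) % 4 = 0

instance (m P Q : ℤ) : Decidable (IsSmallSquare m P Q) := by unfold IsSmallSquare; infer_instance

/-- Two distinct small pairs of the same colour, the first of which is `(t, y)`, represent
integers whose product plus one is a square. -/
def HasPartner (m t y : ℤ) : Prop :=
  ∃ l : ℕ, l < 15 ∧ ((l : ℤ) - 7 - y) % 3 = 0 ∧ m * ((l - 7) * (l - 7)) < 64 ∧
    ∃ k : ℕ, k < 15 ∧ ((k : ℤ) - 7 - t) % colourModulus m = 0 ∧
      IsSmallPair m (k - 7) (l - 7) ∧ ¬ (t = k - 7 ∧ y = l - 7) ∧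
      IsSmallSquare m (t * (k - 7) - m * (y * (l - 7)) + 4) (t * (l - 7) + (k - 7) * y)

instance (m t y : ℤ) : Decidable (HasPartner m t y) := by unfold HasPartner; infer_instance

lemma not_exists_hasPartner : ¬ ∃ m : ℕ, m < 63 ∧ ∃ j : ℕ, j < 15 ∧
    ((m : ℤ) + 1) * ((j - 7) * (j - 7)) < 64 ∧ ∃ i : ℕ, i < 15 ∧
    IsSmallPair (m + 1) (i - 7) (j - 7) ∧ HasPartner (m + 1) (i - 7) (j - 7) := by
  decide +kernel

end SmallElements

section SmallCount

lemma abs_le_of_mul_self_le {x : ℤ} {n : ℤ} (hn : 0 ≤ n) (h : x * x < (n + 1) * (n + 1)) :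
    -n ≤ x ∧ x ≤ n := by
  constructor <;> nlinarith

lemma isSmallSquare_of_product {m t y s z P Q : ℤ} (hm : 1 ≤ m) {t' y' : ℤ}
    (h1 : t * t + m * (y * y) < 64) (h2 : s * s + m * (z * z) < 64)
    (hP : P = t * s - m * (y * z) + 4) (hQ : Q = t * z + s * y)
    (h4 : (t' * t' + m * (y' * y')) % 4 = 0) (hP' : P = t' * t' - m * (y' * y'))
    (hQ' : Q = 2 * (t' * y')) : IsSmallSquare m P Q := by
  have hm0 : 0 < m := by lia
  have hN : t' * t' + m * (y' * y') < 68 := by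
    have e1 : (t' * t' + m * (y' * y')) ^ 2 = P ^ 2 + m * Q ^ 2 := by rw [hP', hQ']; ring
    have e2 : (P - 4) ^ 2 + m * Q ^ 2 =
        (t * t + m * (y * y)) * (s * s + m * (z * z)) := by rw [hP, hQ]; ring
    have p1 : 0 ≤ t * t + m * (y * y) :=
      add_nonneg (mul_self_nonneg _) (mul_nonneg hm0.le (mul_self_nonneg _))
    have p2 : 0 ≤ s * s + m * (z * z) :=
      add_nonneg (mul_self_nonneg _) (mul_nonneg hm0.le (mul_self_nonneg _))
    have e3 : (P - 4) ^ 2 + m * Q ^ 2 ≤ 63 * 63 := by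
      rw [e2]
      exact mul_le_mul (by lia) (by lia) p2 (by norm_num)
    have e4 : P - 4 ≤ 63 := by
      have : 0 ≤ m * Q ^ 2 := by positivity
      nlinarith
    nlinarith
  have hy : m * (y' * y') < 68 := by nlinarith
  have ht : t' * t' < 68 := by
    have : 0 ≤ m * (y' * y') := mul_nonneg hm0.le (mul_self_nonneg _)
    lia
  have hy2 : y' * y' < 68 := by nlinarith [mul_self_nonneg y']
  have by' := abs_le_of_mul_self_le (n := 8) (by norm_num) (by linarith : y' * y' < _)
  have bt' := abs_le_of_mul_self_le (n := 8) (by norm_num) (by linarith : t' * t' < _)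
  have sy : ((y'.natAbs * y'.natAbs : ℕ) : ℤ) = y' * y' := Int.natAbs_mul_self
  have st : ((t'.natAbs * t'.natAbs : ℕ) : ℤ) = t' * t' := Int.natAbs_mul_self
  refine ⟨y'.natAbs, by lia, by rwa [sy], t'.natAbs, by lia, by rw [sy, st, hP'], ?_,
    by rwa [sy, st]⟩
  rw [hQ', Int.natAbs_mul, Int.natAbs_mul]; rfl

lemma colourModulus_pos (m : ℤ) : 0 < colourModulus m := by unfold colourModulus; split <;> lia

lemma colourModulus_le (m : ℤ) : colourModulus m ≤ 5 := by unfold colourModulus; split <;> lia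

lemma card_small_pairs_le {m : ℤ} (hm : 1 ≤ m) (T : Finset (ℤ × ℤ))
    (hT : ∀ p ∈ T, IsSmallPair m p.1 p.2)
    (hpair : ∀ p ∈ T, ∀ q ∈ T, p ≠ q → ∃ t y : ℤ, (t * t + m * (y * y)) % 4 = 0 ∧
      p.1 * q.1 - m * (p.2 * q.2) + 4 = t * t - m * (y * y) ∧
      p.1 * q.2 + q.1 * p.2 = 2 * (t * y)) : T.card ≤ 15 := by
  have hbound : ∀ p ∈ T, (-7 ≤ p.1 ∧ p.1 ≤ 7) ∧ m * (p.2 * p.2) < 64 ∧ -7 ≤ p.2 ∧ p.2 ≤ 7 := by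
    intro p hp
    have h := (hT p hp).1
    have h2 : 0 ≤ m * (p.2 * p.2) := mul_nonneg (by lia) (mul_self_nonneg _)
    have h3 : m * (p.2 * p.2) < 64 := by nlinarith [mul_self_nonneg p.1]
    refine ⟨abs_le_of_mul_self_le (by norm_num) (by lia), h3,
      abs_le_of_mul_self_le (by norm_num) ?_⟩
    nlinarith [mul_self_nonneg p.2]
  rcases lt_or_ge m 64 with hlt | hge
  · have hmaps : ∀ p ∈ T, (p.1 % colourModulus m, p.2 % 3) ∈ Finset.Ico (0 : ℤ) 5 ×ˢ
        Finset.Ico (0 : ℤ) 3 := by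
      intro p _
      have h0 := colourModulus_pos m
      have h1 := colourModulus_le m
      have h2 := Int.emod_nonneg p.1 h0.ne'
      have h3 := Int.emod_lt_of_pos p.1 h0
      rw [Finset.mem_product, Finset.mem_Ico, Finset.mem_Ico]
      dsimp only
      lia
    refine (Finset.card_le_card_of_injOn _ hmaps ?_).trans (by simp)
    intro p hp q hq hpq
    rw [Finset.mem_coe] at hp hq
    by_contra hne
    obtain ⟨t, y, h4, hP, hQ⟩ := hpair p hp q hq hne
    have hsq := isSmallSquare_of_product hm (hT p hp).1 (hT q hq).1 rfl rfl h4 hP hQ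
    rw [Prod.mk.injEq] at hpq
    obtain ⟨⟨a1, a2⟩, a3, a4, a5⟩ := hbound p hp
    obtain ⟨⟨b1, b2⟩, b3, b4, b5⟩ := hbound q hq
    have sp := hT p hp
    have sq := hT q hq
    have hne' : ¬ (p.1 = q.1 ∧ p.2 = q.2) := fun h => hne (Prod.ext h.1 h.2)
    obtain ⟨p1, p2⟩ := p
    obtain ⟨q1, q2⟩ := q
    dsimp only at *
    obtain ⟨n, rfl⟩ : ∃ n : ℕ, m = n + 1 := ⟨(m - 1).toNat, by lia⟩
    obtain ⟨i, rfl⟩ : ∃ n : ℕ, p1 = n - 7 := ⟨(p1 + 7).toNat, by lia⟩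
    obtain ⟨j, rfl⟩ : ∃ n : ℕ, p2 = n - 7 := ⟨(p2 + 7).toNat, by lia⟩
    obtain ⟨k, rfl⟩ : ∃ n : ℕ, q1 = n - 7 := ⟨(q1 + 7).toNat, by lia⟩
    obtain ⟨l, rfl⟩ : ∃ n : ℕ, q2 = n - 7 := ⟨(q2 + 7).toNat, by lia⟩
    exact not_exists_hasPartner ⟨n, by lia, j, by lia, a3, i, by lia, sp, l, by lia,
      Int.emod_eq_emod_iff_emod_sub_eq_zero.1 hpq.2.symm, b3, k, by lia,
      Int.emod_eq_emod_iff_emod_sub_eq_zero.1 hpq.1.symm, sq, hne', hsq⟩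
  · have hzero : ∀ p ∈ T, p.2 = 0 := by
      intro p hp
      have h := (hbound p hp).2.1
      by_contra h0
      have : 0 < p.2 * p.2 := mul_self_pos.2 h0
      nlinarith
    have hmaps : ∀ p ∈ T, p.1 ∈ Finset.Icc (-7 : ℤ) 7 := fun p hp =>
      Finset.mem_Icc.2 (hbound p hp).1
    refine (Finset.card_le_card_of_injOn _ hmaps ?_).trans (by simp)
    intro p hp q hq hpq
    exact Prod.ext hpq ((hzero p hp).trans (hzero q hq).symm)

/-- A subring of `ℂ` whose elements have integral trace and norm lies in `(ℤ + ℤ √-m) / 2` for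
some positive integer `m`. -/
lemma exists_coordinates {O : Subring ℂ} (htr : ∀ u ∈ O, ∃ t : ℤ, 2 * u.re = t)
    (hnorm : ∀ u ∈ O, ∃ n : ℤ, Complex.normSq u = n) :
    ∃ (m : ℤ) (g : ℝ), 1 ≤ m ∧ g * g = m ∧
      ∀ u ∈ O, ∃ t y : ℤ, 2 * u.re = t ∧ 2 * u.im = y * g := by
  set G : AddSubgroup ℝ := O.toAddSubgroup.map
    ((AddMonoidHom.mulLeft (2 : ℝ)).comp Complex.imAddGroupHom) with hG
  have hmem : ∀ u ∈ O, 2 * u.im ∈ G := fun u hu => ⟨u, hu, rfl⟩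
  have hsq : ∀ h ∈ G, ∃ n : ℤ, h * h = n := by
    rintro _ ⟨u, hu, rfl⟩
    obtain ⟨t, ht⟩ := htr u hu
    obtain ⟨n, hn⟩ := hnorm u hu
    refine ⟨4 * n - t * t, ?_⟩
    push_cast
    rw [← hn, ← ht, Complex.normSq_apply]
    simp
    ring
  have hpos : ∀ h ∈ G, h ≠ 0 → ∃ n : ℤ, 1 ≤ n ∧ h * h = n := by
    intro h hh h0
    obtain ⟨n, hn⟩ := hsq h hh
    refine ⟨n, ?_, hn⟩
    have : (0 : ℝ) < n := hn ▸ mul_self_pos.2 h0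
    exact_mod_cast this
  obtain ⟨g, hg⟩ := AddSubgroup.cyclic_of_isolated_zero (H := G) (a := 1) one_pos (by
    rw [Set.disjoint_left]
    rintro h hh ⟨h1, h2⟩
    obtain ⟨n, hn, e⟩ := hpos h hh h1.ne'
    have : (1 : ℝ) ≤ n := by exact_mod_cast hn
    nlinarith)
  have hrep : ∀ u ∈ O, ∃ y : ℤ, 2 * u.im = y * g := by
    intro u hu
    have := hmem u hu
    rw [hg, AddSubgroup.mem_closure_singleton] at this
    obtain ⟨y, hy⟩ := this
    exact ⟨y, by rw [← hy, zsmul_eq_mul]⟩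
  by_cases h0 : g = 0
  · refine ⟨1, 1, le_rfl, by simp, fun u hu => ?_⟩
    obtain ⟨t, ht⟩ := htr u hu
    obtain ⟨y, hy⟩ := hrep u hu
    exact ⟨t, 0, ht, by rw [hy, h0]; simp⟩
  · obtain ⟨m, hm, e⟩ := hpos g (hg ▸ AddSubgroup.mem_closure_singleton_self g) h0
    refine ⟨m, g, hm, e, fun u hu => ?_⟩
    obtain ⟨t, ht⟩ := htr u hu
    obtain ⟨y, hy⟩ := hrep u hu
    exact ⟨t, y, ht, hy⟩

lemma card_small_le {O : Subring ℂ} (htr : ∀ u ∈ O, ∃ t : ℤ, 2 * u.re = t)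
    (hnorm : ∀ u ∈ O, ∃ n : ℤ, Complex.normSq u = n) (S : Finset ℂ)
    (hS : ∀ u ∈ S, u ∈ O ∧ u ≠ 0 ∧ ‖u‖ < 4)
    (hpair : ∀ u ∈ S, ∀ v ∈ S, u ≠ v → SquarePair O u v) : S.card ≤ 15 := by
  obtain ⟨m, g, hm, hg, hrep⟩ := exists_coordinates htr hnorm
  choose! t y ht hy using hrep
  have hN : ∀ u ∈ O, ((t u * t u + m * (y u * y u) : ℤ) : ℝ) = 4 * Complex.normSq u := by
    intro u hu
    push_cast
    rw [Complex.normSq_apply, ← ht u hu, ← hg]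
    linear_combination (-2 * u.im - y u * g) * hy u hu
  have h4 : ∀ u ∈ O, (t u * t u + m * (y u * y u)) % 4 = 0 := by
    intro u hu
    obtain ⟨n, hn⟩ := hnorm u hu
    have := hN u hu
    rw [hn] at this
    have : t u * t u + m * (y u * y u) = 4 * n := by exact_mod_cast this
    lia
  have hinj : Set.InjOn (fun u => (t u, y u)) S := by
    intro u hu v hv huv
    simp only [Prod.mk.injEq] at huv
    have e1 := ht u (hS u hu).1
    have e2 := hy u (hS u hu).1
    rw [huv.1, ← ht v (hS v hv).1] at e1
    rw [huv.2, ← hy v (hS v hv).1] at e2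
    exact Complex.ext (by linarith) (by linarith)
  rw [← Finset.card_image_of_injOn hinj]
  refine card_small_pairs_le hm _ ?_ ?_
  · intro p hp
    obtain ⟨u, hu, rfl⟩ := Finset.mem_image.1 hp
    obtain ⟨huO, hu0, hu4⟩ := hS u hu
    have e := hN u huO
    refine ⟨?_, h4 u huO, ?_⟩
    · have : Complex.normSq u < 16 := by
        rw [Complex.normSq_eq_norm_sq]; nlinarith [norm_nonneg u]
      have : ((t u * t u + m * (y u * y u) : ℤ) : ℝ) < 64 := by linarith
      exact_mod_cast this
    · have := Complex.normSq_pos.2 hu0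
      have : (0 : ℝ) < ((t u * t u + m * (y u * y u) : ℤ) : ℝ) := by linarith
      exact_mod_cast this
  · intro p hp q hq hpq
    obtain ⟨u, hu, rfl⟩ := Finset.mem_image.1 hp
    obtain ⟨v, hv, rfl⟩ := Finset.mem_image.1 hq
    obtain ⟨w, hw, e⟩ := hpair u hu v hv (fun h => hpq (by rw [h]))
    refine ⟨t w, y w, h4 w hw, ?_, ?_⟩
    · have hre := congrArg Complex.re e
      rw [pow_two, Complex.add_re, Complex.mul_re, Complex.mul_re, Complex.one_re] at hre
      have : ((t u * t v - m * (y u * y v) + 4 : ℤ) : ℝ) =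
          ((t w * t w - m * (y w * y w) : ℤ) : ℝ) := by
        push_cast
        rw [← ht u (hS u hu).1, ← ht v (hS v hv).1, ← ht w hw, ← hg]
        have a1 := hy u (hS u hu).1
        have a2 := hy v (hS v hv).1
        have a3 := hy w hw
        linear_combination -4 * hre + 2 * v.im * a1 + y u * g * a2 - 2 * w.im * a3 - y w * g * a3
      exact_mod_cast this
    · have him := congrArg Complex.im e
      rw [pow_two, Complex.add_im, Complex.mul_im, Complex.mul_im, Complex.one_im] at him
      have a1 := hy u (hS u hu).1
      have a2 := hy v (hS v hv).1
      have a3 := hy w hw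
      have h : ((t u * y v + t v * y u : ℤ) : ℝ) * g = ((2 * (t w * y w) : ℤ) : ℝ) * g := by
        push_cast
        rw [← ht u (hS u hu).1, ← ht v (hS v hv).1, ← ht w hw]
        linear_combination -4 * him - 2 * u.re * a2 - 2 * v.re * a1 + 4 * w.re * a3
      have hg0 : g ≠ 0 := by
        rintro rfl
        rw [mul_zero] at hg
        have : m = 0 := by exact_mod_cast hg.symm
        lia
      exact_mod_cast mul_right_cancel₀ hg0 h

end SmallCount

section LargeElements

/-- A finite set with at least `N + 1` elements contains an injective sequence of length `N + 1`
along which a given real function is monotone. -/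
lemma Finset.exists_monotone_seq {α : Type*} (φ : α → ℝ) (S : Finset α) {N : ℕ}
    (h : N < S.card) : ∃ X : ℕ → α, (∀ n, X n ∈ S) ∧ (∀ n, φ (X n) ≤ φ (X (n + 1))) ∧
      ∀ i j, i ≤ N → j ≤ N → i ≠ j → X i ≠ X j := by
  let e := S.equivFin.symm
  let ψ : Fin S.card → ℝ := fun i => φ (e i)
  let Y : Fin S.card → S := fun i => e (Tuple.sort ψ i)
  let ι : ℕ → Fin S.card := fun n => ⟨min n N, by lia⟩
  refine ⟨fun n => Y (ι n), fun n => (Y (ι n)).2, fun n => ?_, fun i j hi hj hij hX => hij ?_⟩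
  · exact Tuple.monotone_sort ψ (show ι n ≤ ι (n + 1) from Fin.mk_le_mk.2 (by lia))
  · have := (Tuple.sort ψ).injective (e.injective (Subtype.ext hX))
    have := Fin.mk.inj_iff.1 this
    lia

lemma card_large_le {O : Subring ℂ} (hO : ∀ u ∈ O, u ≠ 0 → 1 ≤ ‖u‖) (S : Finset ℂ)
    (hS : ∀ u ∈ S, u ∈ O ∧ 4 ≤ ‖u‖)
    (hpair : ∀ u ∈ S, ∀ v ∈ S, u ≠ v → SquarePair O u v) : S.card ≤ 23 := by
  by_contra! hcard
  obtain ⟨X, hXS, hmono, hX⟩ := S.exists_monotone_seq (fun u => ‖u‖) hcard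
  have hXO : ∀ n, X n ∈ O := fun n => (hS _ (hXS n)).1
  have h4 : ∀ n, 4 ≤ ‖X n‖ := fun n => (hS _ (hXS n)).2
  have hp : ∀ i j, i ≤ 23 → j ≤ 23 → i ≠ j → SquarePair O (X i) (X j) := fun i j hi hj hij =>
    hpair _ (hXS i) _ (hXS j) (hX i j hi hj hij)
  refine growth_contradiction (x := fun n => ‖X n‖) h4 (fun n hn => ?_) (fun n hn h10 => ?_)
    (fun n _ => hmono n) (fun hbig => ?_)
  · exact quadruple_gap (b := X (n + 1)) hO (hXO _) (hXO _) (hXO _) (hXO _)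
      (hp _ _ (by lia) (by lia) (by lia)) (hp _ _ (by lia) (by lia) (by lia))
      (hp _ _ (by lia) (by lia) (by lia)) (hp _ _ (by lia) (by lia) (by lia))
      (hp _ _ (by lia) (by lia) (by lia)) (hp _ _ (by lia) (by lia) (by lia))
      (hX _ _ (by lia) (by lia) (by lia)) (by linarith [h4 n]) (hmono _) (hmono _) (hmono _)
  · exact fibonacci_gap (a := X n) hO (hXO _) (hXO _) (hXO _) (hXO _)
      (hp _ _ (by lia) (by lia) (by lia)) (hp _ _ (by lia) (by lia) (by lia))
      (hp _ _ (by lia) (by lia) (by lia)) (hp _ _ (by lia) (by lia) (by lia))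
      (hp _ _ (by lia) (by lia) (by lia)) (hp _ _ (by lia) (by lia) (by lia))
      (hX _ _ (by lia) (by lia) (by lia)) h10 (hmono _) (hmono _) (hmono _)
  · obtain ⟨s, hsO, hs⟩ := hp 6 17 (by lia) (by lia) (by lia)
    obtain ⟨t, htO, ht⟩ := hp 7 17 (by lia) (by lia) (by lia)
    obtain ⟨x, hxO, hx⟩ := hp 6 23 (by lia) (by lia) (by lia)
    obtain ⟨y, hyO, hy⟩ := hp 7 23 (by lia) (by lia) (by lia)
    obtain ⟨z, hzO, hz⟩ := hp 17 23 (by lia) (by lia) (by lia)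
    have hne : ∀ n, X n ≠ 0 := fun n => norm_pos_iff.1 (by linarith [h4 n])
    have hnorm : ‖X 6 * X 7 * X 17‖ = ‖X 6‖ * ‖X 7‖ * ‖X 17‖ := by rw [norm_mul, norm_mul]
    have key := norm_le_pow_of_quadruple hO (hXO 6) (hXO 7) (hXO 17) hsO htO hxO hyO hzO
      (hne 6) (hne 7) (hX 6 7 (by lia) (by lia) (by lia)) (hmono 6)
      (monotone_nat_of_le_succ hmono (by lia : 7 ≤ 17)) hs ht hx hy hz (by rwa [hnorm])
    have hcd : ‖X 17‖ * ‖X 23‖ ≤ ‖z‖ ^ 2 + 1 := by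
      rw [← norm_mul, ← norm_pow, hz]
      have := norm_sub_le (X 17 * X 23 + 1) 1
      rwa [add_sub_cancel_right, norm_one] at this
    refine hcd.trans (add_le_add ?_ le_rfl)
    rw [← hnorm]
    calc ‖z‖ ^ 2 ≤ (‖X 6 * X 7 * X 17‖ ^ 5) ^ 2 := by gcongr
      _ = _ := by ring

end LargeElements

section ImaginaryQuadratic

variable {K : Type*} [Field K] [NumberField K] (f : K →+* ℂ)

lemma trace_norm_eq_of_imaginary_quadratic (hdeg : Module.finrank ℚ K = 2)
    (him : ∃ w : K, (f w).im ≠ 0) (x : K) :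
    ((Algebra.trace ℚ K x : ℚ) : ℂ) = 2 * (f x).re ∧
      ((Algebra.norm ℚ x : ℚ) : ℂ) = Complex.normSq (f x) := by
  classical
  let φ : K →ₐ[ℚ] ℂ := f.toRatAlgHom
  let ψ : K →ₐ[ℚ] ℂ := ((starRingEnd ℂ).comp f).toRatAlgHom
  have hφ : ∀ x, φ x = f x := fun _ => rfl
  have hψ : ∀ x, ψ x = starRingEnd ℂ (f x) := fun _ => rfl
  have hne : φ ≠ ψ := by
    intro h
    obtain ⟨w, hw⟩ := him
    have := DFunLike.congr_fun h w
    rw [hφ, hψ] at this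
    exact hw (Complex.conj_eq_iff_im.1 this.symm)
  have huniv : (Finset.univ : Finset (K →ₐ[ℚ] ℂ)) = {φ, ψ} := by
    symm
    apply Finset.eq_univ_of_card
    rw [Finset.card_pair hne, AlgHom.card, hdeg]
  constructor
  · have h := trace_eq_sum_embeddings (K := ℚ) (L := K) ℂ (x := x)
    rw [huniv, Finset.sum_pair hne, hφ, hψ, Complex.add_conj] at h
    simpa using h
  · have h := Algebra.norm_eq_prod_embeddings ℚ ℂ x
    rw [huniv, Finset.prod_pair hne, hφ, hψ, Complex.mul_conj] at h
    simpa using h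

lemma exists_int_two_mul_re (hdeg : Module.finrank ℚ K = 2) (him : ∃ w : K, (f w).im ≠ 0)
    (u : NumberField.RingOfIntegers K) : ∃ t : ℤ, 2 * (f u).re = t := by
  have h := (trace_norm_eq_of_imaginary_quadratic f hdeg him u).1
  rw [← Algebra.coe_trace_int] at h
  exact ⟨Algebra.trace ℤ _ u, by exact_mod_cast h.symm⟩

lemma exists_int_normSq (hdeg : Module.finrank ℚ K = 2) (him : ∃ w : K, (f w).im ≠ 0)
    (u : NumberField.RingOfIntegers K) : ∃ n : ℤ, Complex.normSq (f u) = n := by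
  have h := (trace_norm_eq_of_imaginary_quadratic f hdeg him u).2
  rw [← Algebra.coe_norm_int] at h
  exact ⟨Algebra.norm ℤ u, by exact_mod_cast h.symm⟩

end ImaginaryQuadratic

open NumberField

/-- Main theorem: there is no Diophantine `m`-tuple with `m ≥ 43` in the ring of integers
of an imaginary quadratic number field: any finite set of nonzero elements of `𝓞 K` such
that the product of any two distinct elements plus one is a square has at most 42
elements. -/
theorem stmt_19 (K : Type*) [Field K] [NumberField K]
    (hdeg : Module.finrank ℚ K = 2)
    (f : K →+* ℂ) (him : ∃ w : K, (f w).im ≠ 0)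
    (S : Finset (𝓞 K)) (h0 : ∀ u ∈ S, u ≠ 0)
    (hsq : ∀ u ∈ S, ∀ v ∈ S, u ≠ v → ∃ w : 𝓞 K, u * v + 1 = w ^ 2) :
    S.card ≤ 42 := by
  classical
  let F : 𝓞 K →+* ℂ := f.comp (algebraMap (𝓞 K) K)
  have hF : Function.Injective F := f.injective.comp RingOfIntegers.coe_injective
  have htr : ∀ u ∈ F.range, ∃ t : ℤ, 2 * u.re = t := by
    rintro _ ⟨u, rfl⟩
    exact exists_int_two_mul_re f hdeg him u
  have hnorm : ∀ u ∈ F.range, ∃ n : ℤ, Complex.normSq u = n := by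
    rintro _ ⟨u, rfl⟩
    exact exists_int_normSq f hdeg him u
  have hO : ∀ u ∈ F.range, u ≠ 0 → 1 ≤ ‖u‖ := by
    intro u hu hu0
    obtain ⟨n, hn⟩ := hnorm u hu
    have h1 : 0 < (n : ℝ) := hn ▸ Complex.normSq_pos.2 hu0
    have h2 : (1 : ℝ) ≤ n := by exact_mod_cast h1
    rw [← hn, Complex.normSq_eq_norm_sq] at h2
    exact (one_le_sq_iff₀ (norm_nonneg u)).1 h2
  have hpair : ∀ u ∈ S.image F, ∀ v ∈ S.image F, u ≠ v → SquarePair F.range u v := by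
    simp only [Finset.mem_image]
    rintro _ ⟨u, hu, rfl⟩ _ ⟨v, hv, rfl⟩ huv
    obtain ⟨w, hw⟩ := hsq u hu v hv (fun h => huv (by rw [h]))
    exact ⟨F w, ⟨w, rfl⟩, by rw [← map_pow, ← hw, map_add, map_mul, map_one]⟩
  have hmem : ∀ u ∈ S.image F, u ∈ F.range ∧ u ≠ 0 := by
    simp only [Finset.mem_image]
    rintro _ ⟨u, hu, rfl⟩
    exact ⟨⟨u, rfl⟩, (map_ne_zero_iff F hF).2 (h0 u hu)⟩
  have hsmall := card_small_le htr hnorm ((S.image F).filter (fun u => ‖u‖ < 4))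
    (fun u hu => ⟨(hmem u (Finset.mem_filter.1 hu).1).1, (hmem u (Finset.mem_filter.1 hu).1).2,
      (Finset.mem_filter.1 hu).2⟩)
    (fun u hu v hv => hpair u (Finset.mem_filter.1 hu).1 v (Finset.mem_filter.1 hv).1)
  have hlarge := card_large_le hO ((S.image F).filter (fun u => ¬ ‖u‖ < 4))
    (fun u hu => ⟨(hmem u (Finset.mem_filter.1 hu).1).1, not_lt.1 (Finset.mem_filter.1 hu).2⟩)
    (fun u hu v hv => hpair u (Finset.mem_filter.1 hu).1 v (Finset.mem_filter.1 hv).1)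
  have hsum := Finset.card_filter_add_card_filter_not (s := S.image F) (fun u => ‖u‖ < 4)
  rw [Finset.card_image_of_injective S hF] at hsum
  lia
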